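/- arXiv:2008.10044 — 2 statements merged into one kernel-verified Lean document; each statement's English description precedes it below -/
import Mathlib

section
/- Let A be a connected Nakayama algebra which is Gorenstein (the left regular module has finite injective dimension and the minimal injective cogenerator has finite projective dimension) and has infinite global dimension. Then fin-pro A is even. -/
open CategoryTheory CategoryTheory.Limits

noncomputable section

namespace ArtinAlg

variable (A : Type) [Ring A]

/-- `M` admits a projective resolution of length at most `n`. -/
inductive ProjDimLE : ℕ → ModuleCat.{0} A → Prop
  | zero (M : ModuleCat.{0} A) (h : Projective M) : ProjDimLE 0 M
  | succ (n : ℕ) (M P : ModuleCat.{0} A) (f : P ⟶ M) (hP : Projective P) (hf : Epi f)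
      (h : ProjDimLE n (kernel f)) : ProjDimLE (n + 1) M

/-- `M` admits an injective coresolution of length at most `n`. -/
inductive InjDimLE : ℕ → ModuleCat.{0} A → Prop
  | zero (M : ModuleCat.{0} A) (h : Injective M) : InjDimLE 0 M
  | succ (n : ℕ) (M I : ModuleCat.{0} A) (f : M ⟶ I) (hI : Injective I) (hf : Mono f)
      (h : InjDimLE n (cokernel f)) : InjDimLE (n + 1) M

/-- The projective dimension `pd M ∈ ℕ∞`. -/
def projDim (M : ModuleCat.{0} A) : ℕ∞ :=
  sInf {d : ℕ∞ | ∃ n : ℕ, d = n ∧ ProjDimLE A n M}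

/-- The injective dimension `id M ∈ ℕ∞`. -/
def injDim (M : ModuleCat.{0} A) : ℕ∞ :=
  sInf {d : ℕ∞ | ∃ n : ℕ, d = n ∧ InjDimLE A n M}

/-- `f : P ⟶ M` is a projective cover: `P` is projective and `f` is an essential
(superfluous) epimorphism. -/
def IsProjectiveCoverHom {P M : ModuleCat.{0} A} (f : P ⟶ M) : Prop :=
  Projective P ∧ Epi f ∧ ∀ (N : ModuleCat.{0} A) (g : N ⟶ P), Epi (g ≫ f) → Epi g

/-- `P` is a projective cover of `M`. -/
def IsProjCoverOf (M P : ModuleCat.{0} A) : Prop :=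
  ∃ f : P ⟶ M, IsProjectiveCoverHom A f

/-- `f : M ⟶ I` is an injective envelope: `I` is injective and `f` is an essential
monomorphism. -/
def IsInjectiveEnvelopeHom {M I : ModuleCat.{0} A} (f : M ⟶ I) : Prop :=
  Injective I ∧ Mono f ∧ ∀ (N : ModuleCat.{0} A) (g : I ⟶ N), Mono (f ≫ g) → Mono g

/-- `I` is an injective envelope of `M`. -/
def IsInjEnvOf (M I : ModuleCat.{0} A) : Prop :=
  ∃ f : M ⟶ I, IsInjectiveEnvelopeHom A f

/-- `X ≅ Ω M`, the kernel of a projective cover of `M`. -/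
def IsSyzygyOf (M X : ModuleCat.{0} A) : Prop :=
  ∃ (P : ModuleCat.{0} A) (f : P ⟶ M), IsProjectiveCoverHom A f ∧ Nonempty (X ≅ kernel f)

/-- `X ≅ Σ M`, the cokernel of an injective envelope of `M`. -/
def IsCosyzygyOf (M X : ModuleCat.{0} A) : Prop :=
  ∃ (I : ModuleCat.{0} A) (f : M ⟶ I), IsInjectiveEnvelopeHom A f ∧ Nonempty (X ≅ cokernel f)

/-- `X ≅ Ω^n M`. -/
def IsNthSyzygy : ℕ → ModuleCat.{0} A → ModuleCat.{0} A → Prop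
  | 0, M, X => Nonempty (X ≅ M)
  | n + 1, M, X => ∃ Y, IsSyzygyOf A M Y ∧ IsNthSyzygy n Y X

/-- `X ≅ Σ^n M`. -/
def IsNthCosyzygy : ℕ → ModuleCat.{0} A → ModuleCat.{0} A → Prop
  | 0, M, X => Nonempty (X ≅ M)
  | n + 1, M, X => ∃ Y, IsCosyzygyOf A M Y ∧ IsNthCosyzygy n Y X

/-- `X` is a direct summand of `Y`. -/
def IsDirectSummandOf (X Y : ModuleCat.{0} A) : Prop :=
  ∃ (i : X ⟶ Y) (r : Y ⟶ X), i ≫ r = 𝟙 X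

/-- `X ∈ add W` : `X` is a direct summand of a finite direct sum of copies of `W`. -/
def InAdd (X W : ModuleCat.{0} A) : Prop :=
  ∃ n : ℕ, IsDirectSummandOf A X (ModuleCat.of A (Fin n → ↥W))

/-- The delooping level of `M` is at most `d` :
`Ω^d M ∈ add (A ⊕ Ω^{d+1} M')` for some finitely generated `M'`. -/
def DelLE (d : ℕ) (M : ModuleCat.{0} A) : Prop :=
  ∃ X, IsNthSyzygy A d M X ∧
    ∃ M' : ModuleCat.{0} A, Module.Finite A ↥M' ∧
      ∃ X', IsNthSyzygy A (d + 1) M' X' ∧ InAdd A X (ModuleCat.of A (A × ↥X'))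

/-- The delooping level `del M ∈ ℕ∞`. -/
def delLevel (M : ModuleCat.{0} A) : ℕ∞ :=
  sInf {d : ℕ∞ | ∃ n : ℕ, d = n ∧ DelLE A n M}

/-- The delooping level of the algebra: the supremum of `del S` over the simple modules. -/
def delAlg : ℕ∞ :=
  sSup {d : ℕ∞ | ∃ S : ModuleCat.{0} A, IsSimpleModule A ↥S ∧ delLevel A S = d}

/-- `Q` is a minimal injective cogenerator: the injective envelope of the direct sum of
a complete set of representatives of the simple modules. -/
def IsMinimalInjectiveCogenerator (Q : ModuleCat.{0} A) : Prop :=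
  ∃ (ι : Type) (_ : Fintype ι) (S : ι → ModuleCat.{0} A),
    (∀ i, IsSimpleModule A ↥(S i)) ∧
    (∀ T : ModuleCat.{0} A, IsSimpleModule A ↥T → ∃! i, Nonempty (↥T ≃ₗ[A] ↥(S i))) ∧
    IsInjEnvOf A (ModuleCat.of A (∀ i, ↥(S i))) Q

/-- The desuspending level of `M` is at most `d` :
`Σ^d M ∈ add (D(A) ⊕ Σ^{d+1} M')` for some finitely generated `M'`. -/
def DesLE (d : ℕ) (M : ModuleCat.{0} A) : Prop :=
  ∃ X, IsNthCosyzygy A d M X ∧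
    ∃ Q, IsMinimalInjectiveCogenerator A Q ∧
      ∃ M' : ModuleCat.{0} A, Module.Finite A ↥M' ∧
        ∃ X', IsNthCosyzygy A (d + 1) M' X' ∧ InAdd A X (ModuleCat.of A (↥Q × ↥X'))

/-- The desuspending level `des M ∈ ℕ∞`. -/
def desLevel (M : ModuleCat.{0} A) : ℕ∞ :=
  sInf {d : ℕ∞ | ∃ n : ℕ, d = n ∧ DesLE A n M}

/-- The desuspending level of the algebra. -/
def desAlg : ℕ∞ :=
  sSup {d : ℕ∞ | ∃ S : ModuleCat.{0} A, IsSimpleModule A ↥S ∧ desLevel A S = d}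

/-- The (small) finitistic projective dimension `fin-pro A`. -/
def finProDim : ℕ∞ :=
  sSup {d : ℕ∞ | ∃ M : ModuleCat.{0} A, Module.Finite A ↥M ∧ projDim A M = d ∧ d ≠ ⊤}

/-- The (small) finitistic injective dimension `fin-inj A`. -/
def finInjDim : ℕ∞ :=
  sSup {d : ℕ∞ | ∃ M : ModuleCat.{0} A, Module.Finite A ↥M ∧ injDim A M = d ∧ d ≠ ⊤}

/-- The big finitistic projective dimension `Fin-pro A`. -/
def bigFinProDim : ℕ∞ :=
  sSup {d : ℕ∞ | ∃ M : ModuleCat.{0} A, projDim A M = d ∧ d ≠ ⊤}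

/-- The big finitistic injective dimension `Fin-inj A`. -/
def bigFinInjDim : ℕ∞ :=
  sSup {d : ℕ∞ | ∃ M : ModuleCat.{0} A, injDim A M = d ∧ d ≠ ⊤}

/-- `M` is an indecomposable nonzero module. -/
def Indec (M : ModuleCat.{0} A) : Prop :=
  Nontrivial ↥M ∧ ∀ (N₁ N₂ : Submodule A ↥M), IsCompl N₁ N₂ → N₁ = ⊥ ∨ N₂ = ⊥

/-- `M` is serial (uniserial): its submodules form a chain. -/
def IsUniserial (M : ModuleCat.{0} A) : Prop :=
  ∀ N₁ N₂ : Submodule A ↥M, N₁ ≤ N₂ ∨ N₂ ≤ N₁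

/-- `A` is a Nakayama algebra: all finitely generated indecomposable modules are serial. -/
def IsNakayama : Prop :=
  ∀ M : ModuleCat.{0} A, Module.Finite A ↥M → Indec A M → IsUniserial A M

/-- `A` is connected: it is not a nontrivial product of algebras. -/
def IsConnectedAlgebra : Prop :=
  Nontrivial A ∧ ∀ e : A, IsIdempotentElem e → e ∈ Set.center A → e = 0 ∨ e = 1

/-- `A` is a cyclic Nakayama algebra: connected Nakayama with no simple projective module. -/
def IsCyclicNakayama : Prop :=
  IsNakayama A ∧ IsConnectedAlgebra A ∧
    ¬ ∃ S : ModuleCat.{0} A, IsSimpleModule A ↥S ∧ Projective S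

/-- `T ≅ top M` (and `top M` is simple): there is an essential epimorphism `M ⟶ T`. -/
def IsSimpleTopOf (M T : ModuleCat.{0} A) : Prop :=
  IsSimpleModule A ↥T ∧
    ∃ f : M ⟶ T, Epi f ∧ ∀ (N : ModuleCat.{0} A) (g : N ⟶ M), Epi (g ≫ f) → Epi g

/-- `S ≅ soc M` (and `soc M` is simple): there is an essential monomorphism `S ⟶ M`. -/
def IsSimpleSocOf (M S : ModuleCat.{0} A) : Prop :=
  IsSimpleModule A ↥S ∧
    ∃ f : S ⟶ M, Mono f ∧ ∀ (N : ModuleCat.{0} A) (g : M ⟶ N), Mono (f ≫ g) → Mono g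

/-- `0 ⟶ N ⟶ E ⟶ M ⟶ 0` is an almost split (Auslander-Reiten) sequence. -/
def IsAlmostSplitSeq {N E M : ModuleCat.{0} A} (f : N ⟶ E) (g : E ⟶ M) : Prop :=
  Mono f ∧ Epi g ∧ (∃ w : f ≫ g = 0, (ShortComplex.mk f g w).Exact) ∧
  (¬ ∃ s : M ⟶ E, s ≫ g = 𝟙 M) ∧ Indec A N ∧ Indec A M ∧
  ∀ (X : ModuleCat.{0} A) (h : X ⟶ M), (¬ ∃ s : M ⟶ X, s ≫ h = 𝟙 M) → ∃ h' : X ⟶ E, h' ≫ g = h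

/-- `N ≅ τ M`, the Auslander-Reiten translate of `M` : there is an almost split sequence
`0 ⟶ N ⟶ E ⟶ M ⟶ 0`. -/
def IsTauOf (N M : ModuleCat.{0} A) : Prop :=
  ∃ (E : ModuleCat.{0} A) (f : N ⟶ E) (g : E ⟶ M), IsAlmostSplitSeq A f g

/-- `U ≅ ψ S = τ⁻ top (I S)`. -/
def IsPsiOf (S U : ModuleCat.{0} A) : Prop :=
  ∃ I, IsInjEnvOf A S I ∧ ∃ T, IsSimpleTopOf A I T ∧ IsTauOf A T U

/-- `T ≅ γ S = τ soc (P S)`. -/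
def IsGammaOf (S T : ModuleCat.{0} A) : Prop :=
  ∃ P, IsProjCoverOf A S P ∧ ∃ U, IsSimpleSocOf A P U ∧ IsTauOf A T U

/-- `T ≅ φ S = top (I S)`. -/
def IsPhiOf (S T : ModuleCat.{0} A) : Prop :=
  ∃ I, IsInjEnvOf A S I ∧ IsSimpleTopOf A I T

/-- There is a `ψ`-path `(S_1, …, S_m)` of cardinality `m` ending in `S`. -/
def PsiPathTo (m : ℕ) (S : ModuleCat.{0} A) : Prop :=
  1 ≤ m ∧ ∃ c : ℕ → ModuleCat.{0} A,
    (∀ i < m, IsSimpleModule A ↥(c i)) ∧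
    (∀ i, i + 1 < m → IsPsiOf A (c i) (c (i + 1))) ∧
    Nonempty (c (m - 1) ≅ S)

/-- `a(S)`: the supremum of the cardinalities of `ψ`-paths ending in `S`. -/
def aVal (S : ModuleCat.{0} A) : ℕ∞ :=
  sSup {d : ℕ∞ | ∃ m : ℕ, d = m ∧ PsiPathTo A m S}

/-- `a(A)`: the maximum of `a(S)` over the simple modules which are not `ψ`-cyclic. -/
def aAlg : ℕ∞ :=
  sSup {d : ℕ∞ | ∃ S : ModuleCat.{0} A, IsSimpleModule A ↥S ∧ aVal A S ≠ ⊤ ∧ aVal A S = d}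

/-- `S` is a composition factor of `M`: a simple subquotient of `M`. -/
def IsCompFactorOf (S M : ModuleCat.{0} A) : Prop :=
  IsSimpleModule A ↥S ∧ ∃ N' N : Submodule A ↥M, N' ≤ N ∧
    Nonempty ((↥N ⧸ N'.comap N.subtype) ≃ₗ[A] ↥S)

/-- `e(S) = min {pd S, pd (I S)} = x`. -/
def ERelVal (S : ModuleCat.{0} A) (x : ℕ∞) : Prop :=
  ∃ I, IsInjEnvOf A S I ∧ x = min (projDim A S) (projDim A I)

/-- `e*(S) = min {id S, id (P S)} = x`. -/
def EStarVal (S : ModuleCat.{0} A) (x : ℕ∞) : Prop :=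
  ∃ P, IsProjCoverOf A S P ∧ x = min (injDim A S) (injDim A P)

/-- `T = h(S) = top (Ω^{e(S)} N S)`, the homological permutation. -/
def HRel (S T : ModuleCat.{0} A) : Prop :=
  IsSimpleModule A ↥S ∧ IsSimpleModule A ↥T ∧
  ∃ z : ℕ, ERelVal A S z ∧
    ∃ N, ((Odd z ∧ N = S) ∨ (Even z ∧ IsInjEnvOf A S N)) ∧
      ∃ X, IsNthSyzygy A z N X ∧ IsSimpleTopOf A X T

/-- `S = h*(T) = soc (Σ^{e*(T)} N* T)`, the inverse homological permutation. -/
def HStarRel (T S : ModuleCat.{0} A) : Prop :=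
  IsSimpleModule A ↥T ∧ IsSimpleModule A ↥S ∧
  ∃ z : ℕ, EStarVal A T z ∧
    ∃ N, ((Odd z ∧ N = T) ∨ (Even z ∧ IsProjCoverOf A T N)) ∧
      ∃ X, IsNthCosyzygy A z N X ∧ IsSimpleSocOf A X S

/-- The `t`-fold relational iterate of a relation on modules (up to isomorphism). -/
def IterRel (r : ModuleCat.{0} A → ModuleCat.{0} A → Prop) :
    ℕ → ModuleCat.{0} A → ModuleCat.{0} A → Prop
  | 0, X, Y => Nonempty (X ≅ Y)
  | n + 1, X, Y => ∃ Z, r X Z ∧ IterRel r n Z Y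

end ArtinAlg

/-!
Walking down the quiver of `A` lays the simple modules out periodically along `ℤ`, so that every
indecomposable is an interval `[i, j)` and the projective cover of the simple at `i` is `[i, f i)`
for a monotone self-map `f` of `ℤ` with `t < f t`, the Kupisch series. The syzygy of `[i, j)` is
`[j, f i)`, unless it is zero; iterating, the end points of the syzygies are
`i, j, f i, f j, f (f i), …`, and the projective dimension is read off from the first coincidence
of consecutive terms.

Suppose `fin-pro A = 2 k + 1`, attained at `[i, j)`. The least `a` with `j ≤ f a` makes `[a, j)` a
direct summand of the injective cogenerator, so `[a, j)` has finite projective dimension, hence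
projective dimension at most `2 k + 1`. The resulting coincidences, together with those of
`[a, i)`, give `f^[k + 1] a = f^[k + 1] (f (a - 1))`. Thus `f` sends one element of its stable
image to the next larger one, and being an order automorphism there, it sends each to the next.
For large `m` this means that `f^[m] (t + 1)` is `f^[m] t` or `f^[m + 1] t` for every `t`, so all
simples `[t, t + 1)` have finite projective dimension and `A` has finite global dimension.
-/

namespace ArtinAlg

open scoped AddConstMap

section PeriodicMaps

variable {f : ℤ → ℤ}

theorem add_natCast_le_iterate (hlt : ∀ t, t < f t) (x : ℤ) (t : ℕ) : x + t ≤ f^[t] x := by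
  induction t with
  | zero => simp
  | succ t ih =>
    rw [Function.iterate_succ_apply']
    have := hlt (f^[t] x)
    push_cast
    omega

theorem iterate_eq_iterate_of_le {k m : ℕ} (hkm : k ≤ m) {x y : ℤ} (h : f^[k] x = f^[k] y) :
    f^[m] x = f^[m] y := by
  obtain ⟨d, rfl⟩ := Nat.exists_eq_add_of_le' hkm
  rw [Function.iterate_add_apply, h, ← Function.iterate_add_apply]

theorem iterate_le_or_le_iterate_succ (hf : Monotone f) {k m : ℕ} {x : ℤ}
    (hx : f^[k] (x + 1) = f^[k + 1] x) (hkm : k ≤ m) (w : ℤ) :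
    f^[m] w ≤ f^[m] x ∨ f^[m + 1] x ≤ f^[m] w := by
  have hxm : f^[m] (x + 1) = f^[m + 1] x := by
    rw [Function.iterate_succ_apply]
    exact iterate_eq_iterate_of_le hkm hx
  rcases le_or_gt w x with h | h
  · exact .inl (hf.iterate m h)
  · exact .inr (hxm ▸ hf.iterate m h)

theorem exists_iterate_le_and_lt_iterate_succ (hlt : ∀ t, t < f t) {N : ℕ} {x z : ℤ}
    (h : f^[N] x ≤ z) : ∃ t, f^[N + t] x ≤ z ∧ z < f^[N + t + 1] x := by
  have orbit_strictMono : StrictMono fun t => f^[N + t] x :=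
    strictMono_nat_of_lt_succ fun t => by
      rw [← add_assoc, Function.iterate_succ_apply']
      exact hlt _
  have orbit_tendsto : Filter.Tendsto (fun t => f^[N + t] x) .atTop .atTop := by
    refine Filter.tendsto_atTop_mono (fun t => ?_)
      (Filter.tendsto_atTop_add_const_left _ x tendsto_natCast_atTop_atTop)
    have := add_natCast_le_iterate hlt x (N + t)
    push_cast at this
    omega
  obtain ⟨t, ht, ht'⟩ := orbit_strictMono.exists_between_of_tendsto_atTop orbit_tendsto
    (x := z + 1) (Int.lt_add_one_of_le h)
  exact ⟨t, Int.lt_add_one_iff.1 ht, Int.add_one_le_iff.1 ht'⟩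

theorem iterate_add_zsmul {a : ℤ} (f : ℤ →+c[a, a] ℤ) (m : ℕ) (x s : ℤ) :
    f^[m] (x + s • a) = f^[m] x + s • a := by
  rw [← AddConstMap.coe_pow, AddConstMapClass.map_add_zsmul]

theorem exists_range_iterate_subset {n : ℕ} [NeZero n] (f : ℤ →+c[(n : ℤ), (n : ℤ)] ℤ) (k : ℕ) :
    ∃ N, k ≤ N ∧ ∀ b, Set.range f^[N] ⊆ Set.range f^[b] := by
  let residues (b : ℕ) : Set (ZMod n) := Int.cast '' Set.range f^[b]
  have residues_antitone : Antitone residues := by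
    refine antitone_nat_of_succ_le fun b => Set.image_mono ?_
    rintro _ ⟨x, rfl⟩
    exact ⟨f x, rfl⟩
  obtain ⟨N₀, hN₀⟩ := WellFoundedLT.antitone_chain_condition residues_antitone
  have residues_le (b : ℕ) : residues (max k N₀) ⊆ residues b := by
    rcases le_total b N₀ with h | h
    · exact residues_antitone (h.trans (le_max_right k N₀))
    · rw [← hN₀ _ (le_max_right k N₀), hN₀ b h]
  refine ⟨max k N₀, le_max_left _ _, fun b u hu => ?_⟩
  obtain ⟨_, ⟨w, rfl⟩, hw⟩ := residues_le b (Set.mem_image_of_mem _ hu)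
  obtain ⟨s, hs⟩ := (ZMod.intCast_eq_intCast_iff_dvd_sub _ _ _).1 hw
  refine ⟨w + s • (n : ℤ), ?_⟩
  rw [iterate_add_zsmul, smul_eq_mul, mul_comm, ← hs]
  ring

/- On its stable image `f` is an order automorphism. The hypothesis on `x` makes it send one
element of the stable image to the next larger one, so it does this to every element. -/
theorem exists_forall_iterate_eq_or_eq {n : ℕ} [NeZero n] (f : ℤ →+c[(n : ℤ), (n : ℤ)] ℤ)
    (hf : Monotone f) (hlt : ∀ t, t < f t) {x : ℤ} {k : ℕ} (hx : f^[k] (x + 1) = f^[k + 1] x) :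
    ∃ m, ∀ y, f^[m] y = f^[m] (y + 1) ∨ f^[m] (y + 1) = f^[m + 1] y := by
  obtain ⟨N, hkN, hN⟩ := exists_range_iterate_subset f k
  have gap (t : ℕ) (y : ℤ) : f^[N] y ≤ f^[N + t] x ∨ f^[N + t + 1] x ≤ f^[N] y := by
    obtain ⟨w, hw⟩ := hN (N + t) ⟨y, rfl⟩
    rw [← hw]
    exact iterate_le_or_le_iterate_succ hf hx (by omega) w
  refine ⟨N, fun y => ?_⟩
  wlog hxy : x ≤ y generalizing y
  · have hle : x ≤ y + |x - y| • (n : ℤ) := by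
      have := le_abs_self (x - y)
      have := abs_nonneg (x - y)
      have : (1 : ℤ) ≤ n := by exact_mod_cast NeZero.one_le
      rw [smul_eq_mul]
      nlinarith
    have := this _ hle
    rw [add_right_comm, iterate_add_zsmul, iterate_add_zsmul, iterate_add_zsmul] at this
    simpa only [add_left_inj] using this
  obtain ⟨t, ht, ht'⟩ := exists_iterate_le_and_lt_iterate_succ hlt (hf.iterate N hxy)
  have hy : f^[N] y = f^[N + t] x :=
    le_antisymm ((gap t y).resolve_right ht'.not_ge) ht
  have hy_succ : f^[N + 1] y = f^[N + t + 1] x := by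
    rw [Function.iterate_succ_apply', hy, Function.iterate_succ_apply']
  rcases gap t (y + 1) with h | h
  · exact .inl (le_antisymm (hf.iterate N (by omega)) (hy ▸ h))
  · refine .inr (le_antisymm ?_ (hy_succ ▸ h))
    rw [Function.iterate_succ_apply]
    exact hf.iterate N (hlt y)

theorem iterate_eq_iterate_succ_pred (hf : Monotone f) (hlt : ∀ t, t < f t) {a i j : ℤ} {k : ℕ}
    (hai : a ≤ i) (haj : f (a - 1) < j)
    (hij : f^[k + 1] i = f^[k + 1] j) (hij' : f^[k] i ≠ f^[k] j) (hji : f^[k] j ≠ f^[k + 1] i)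
    (haj' : f^[k] j = f^[k + 1] a ∨ f^[k + 1] a = f^[k + 1] j)
    (hai' : a < i → f^[k + 1] i = f^[k + 2] a →
      f^[k] i = f^[k + 1] a ∨ f^[k + 1] a = f^[k + 1] i) :
    f^[k + 1] a = f^[k + 2] (a - 1) := by
  have of_eq (h : f^[k + 1] a = f^[k + 1] j) : f^[k + 1] a = f^[k + 2] (a - 1) := by
    rw [Function.iterate_succ_apply f (k + 1)]
    exact le_antisymm (hf.iterate _ (Int.le_of_sub_one_lt (hlt _))) (h ▸ hf.iterate _ haj.le)
  rcases haj' with hja | hja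
  · have hai_lt : a < i := lt_of_le_of_ne hai fun h => hji (h ▸ hja)
    have hia : f^[k + 1] i = f^[k + 2] a := by
      rw [hij, Function.iterate_succ_apply', hja, ← Function.iterate_succ_apply' f]
    rcases hai' hai_lt hia with h | h
    · exact absurd (h.trans hja.symm) hij'
    · exact of_eq (h.trans hij)
  · exact of_eq hja

end PeriodicMaps

section ProjectiveDimension

variable {A : Type} [Ring A]

theorem projDimLE_iff {n : ℕ} {M : ModuleCat.{0} A} :
    ProjDimLE A n M ↔ HasProjectiveDimensionLE M n := by
  have shift {n : ℕ} {M P : ModuleCat.{0} A} (f : P ⟶ M) (hP : Projective P) (hf : Epi f) :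
      HasProjectiveDimensionLE M (n + 1) ↔ HasProjectiveDimensionLE (kernel f) n :=
    have hS : (ShortComplex.mk (kernel.ι f) f (kernel.condition f)).ShortExact :=
      { exact := ShortComplex.exact_kernel f }
    hS.hasProjectiveDimensionLT_X₃_iff n hP
  induction n generalizing M with
  | zero =>
    rw [← projective_iff_hasProjectiveDimensionLE_zero]
    exact ⟨fun | .zero _ h => h, .zero M⟩
  | succ n ih =>
    constructor
    · rintro (_ | ⟨_, _, P, f, hP, hf, h⟩)
      exact (shift f hP hf).2 (ih.1 h)
    · intro h
      exact .succ n M _ (Projective.π M) inferInstance inferInstance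
        (ih.2 ((shift (Projective.π M) inferInstance inferInstance).1 h))

theorem projDim_le_iff {n : ℕ} {M : ModuleCat.{0} A} :
    projDim A M ≤ n ↔ HasProjectiveDimensionLE M n := by
  refine ⟨fun h => ?_, fun h => sInf_le ⟨n, rfl, projDimLE_iff.2 h⟩⟩
  have hne : {d : ℕ∞ | ∃ n : ℕ, d = n ∧ ProjDimLE A n M}.Nonempty := by
    by_contra hempty
    rw [projDim, Set.not_nonempty_iff_eq_empty.1 hempty, sInf_empty] at h
    exact ENat.natCast_ne_top n (top_le_iff.1 h)
  obtain ⟨m, hm, hm'⟩ := csInf_mem hne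
  have hmn : m ≤ n := by
    rw [projDim, hm] at h
    exact_mod_cast h
  have := projDimLE_iff.1 hm'
  exact hasProjectiveDimensionLT_of_ge M (m + 1) (n + 1) (by omega)

variable (A) in
/-- The projective dimension of an unbundled module. -/
def pd (M : Type) [AddCommGroup M] [Module A M] : ℕ∞ :=
  projDim A (ModuleCat.of A M)

variable {M N : Type} [AddCommGroup M] [Module A M] [AddCommGroup N] [Module A N]

theorem pd_le_iff {n : ℕ} : pd A M ≤ n ↔ HasProjectiveDimensionLE (ModuleCat.of A M) n :=
  projDim_le_iff

theorem pd_le_zero_iff : pd A M ≤ 0 ↔ Module.Projective A M := by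
  rw [IsProjective.iff_projective, projective_iff_hasProjectiveDimensionLE_zero, ← pd_le_iff,
    Nat.cast_zero]

theorem pd_le_pd_of_leftInverse {i : M →ₗ[A] N} {r : N →ₗ[A] M}
    (h : Function.LeftInverse r i) : pd A M ≤ pd A N := by
  let retract : Retract (ModuleCat.of A M) (ModuleCat.of A N) :=
    ⟨ModuleCat.ofHom i, ModuleCat.ofHom r, by ext x; exact h x⟩
  obtain hN | hN := eq_or_ne (pd A N) ⊤
  · exact hN ▸ le_top
  · obtain ⟨n, hn⟩ := ENat.ne_top_iff_exists.1 hN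
    have := pd_le_iff.1 hn.ge
    exact hn ▸ pd_le_iff.2 (retract.hasProjectiveDimensionLT (n + 1))

theorem pd_congr (e : M ≃ₗ[A] N) : pd A M = pd A N :=
  le_antisymm (pd_le_pd_of_leftInverse (i := e.toLinearMap) (r := e.symm.toLinearMap) e.left_inv)
    (pd_le_pd_of_leftInverse (i := e.symm.toLinearMap) (r := e.toLinearMap) e.right_inv)

theorem pd_le_succ_iff_pd_ker_le [Module.Projective A M] {g : M →ₗ[A] N}
    (hg : Function.Surjective g) {n : ℕ} :
    pd A N ≤ (n + 1 : ℕ) ↔ pd A (LinearMap.ker g) ≤ n := by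
  rw [pd_le_iff, pd_le_iff]
  exact (LinearMap.shortExact_shortComplexKer hg).hasProjectiveDimensionLT_X₃_iff n
    ((IsProjective.iff_projective M).1 inferInstance)

theorem pd_le_of_submodule_of_quotient (p : Submodule A M) {n : ℕ} (hp : pd A p ≤ n)
    (hq : pd A (M ⧸ p) ≤ n) : pd A M ≤ n := by
  rw [← pd_congr (LinearEquiv.ofEq _ _ p.ker_mkQ)] at hp
  rw [pd_le_iff] at hp hq ⊢
  exact (LinearMap.shortExact_shortComplexKer p.mkQ_surjective).hasProjectiveDimensionLT_X₂ _ hp hq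

theorem pd_dfinsupp_le_succ {ι : Type} {F X : ι → Type} [∀ i, AddCommGroup (F i)]
    [∀ i, Module A (F i)] [∀ i, AddCommGroup (X i)] [∀ i, Module A (X i)]
    [∀ i, Module.Projective A (F i)] {g : ∀ i, F i →ₗ[A] X i} (hg : ∀ i, Function.Surjective (g i))
    {n : ℕ} (h : pd A (Π₀ i, LinearMap.ker (g i)) ≤ n) : pd A (Π₀ i, X i) ≤ (n + 1 : ℕ) := by
  classical
  let cover : (Π₀ i, F i) →ₗ[A] (Π₀ i, X i) := DFinsupp.mapRange.linearMap g
  let inclusion : (Π₀ i, LinearMap.ker (g i)) →ₗ[A] (Π₀ i, F i) :=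
    DFinsupp.mapRange.linearMap fun i => (LinearMap.ker (g i)).subtype
  have cover_surjective : Function.Surjective cover :=
    (DFinsupp.mapRange_surjective _ fun i => (g i).map_zero).2 hg
  have inclusion_injective : Function.Injective inclusion :=
    (DFinsupp.mapRange_injective _ fun _ => rfl).2 fun i => Subtype.val_injective
  have range_inclusion : LinearMap.range inclusion = LinearMap.ker cover := by
    rw [DFinsupp.range_mapRangeLinearMap, DFinsupp.ker_mapRangeLinearMap]
    simp only [Submodule.range_subtype]
  rw [pd_le_succ_iff_pd_ker_le cover_surjective,
    ← pd_congr ((LinearEquiv.ofInjective _ inclusion_injective).trans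
      (LinearEquiv.ofEq _ _ range_inclusion))]
  exact h

theorem pd_dfinsupp_le {ι : Type} {X : ι → Type} [∀ i, AddCommGroup (X i)] [∀ i, Module A (X i)]
    {n : ℕ} (h : ∀ i, pd A (X i) ≤ n) : pd A (Π₀ i, X i) ≤ n := by
  classical
  induction n generalizing X with
  | zero =>
    have (i : ι) : Module.Projective A (X i) := pd_le_zero_iff.1 (by exact_mod_cast h i)
    exact_mod_cast pd_le_zero_iff.2 inferInstance
  | succ n ih =>
    have hg (i : ι) := Finsupp.linearCombination_id_surjective A (X i)
    exact pd_dfinsupp_le_succ hg (ih fun i => (pd_le_succ_iff_pd_ker_le (hg i)).1 (h i))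

theorem pd_le_of_forall_isSimpleModule [IsArtinianRing A] {n : ℕ}
    (h : ∀ (S : Type) [AddCommGroup S] [Module A S], IsSimpleModule A S → pd A S ≤ n)
    (M : Type) [AddCommGroup M] [Module A M] : pd A M ≤ n := by
  refine IsSemiprimaryRing.induction A A M (P := fun M _ _ _ => pd A M ≤ n) ?_ ?_
  · intro M _ _ _ _ _ _
    obtain ⟨s, e, -, hs⟩ := IsSemisimpleModule.exists_linearEquiv_dfinsupp A M
    rw [pd_congr e]
    exact pd_dfinsupp_le fun m => h _ (hs m)
  · intro M _ _ _ _ N hN hq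
    exact pd_le_of_submodule_of_quotient N hN hq

theorem pd_le_finProDim {M : Type} [AddCommGroup M] [Module A M] [hM : Module.Finite A M]
    (h : pd A M ≠ ⊤) : pd A M ≤ finProDim A :=
  le_sSup ⟨.of A M, hM, rfl, h⟩

end ProjectiveDimension

section Length

variable (A : Type*) [Ring A]

/-- The length of a module as a natural number; it is only meaningful for modules of finite length,
and is `0` otherwise. -/
def natLength (M : Type*) [AddCommGroup M] [Module A M] : ℕ :=
  (Module.length A M).toNat

variable {A} {M N : Type*} [AddCommGroup M] [Module A M] [AddCommGroup N] [Module A N]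

theorem natLength_congr (e : M ≃ₗ[A] N) : natLength A M = natLength A N := by
  rw [natLength, natLength, e.length_eq]

theorem natLength_range_of_injective {g : N →ₗ[A] M} (hg : Function.Injective g) :
    natLength A (LinearMap.range g) = natLength A N :=
  (natLength_congr (LinearEquiv.ofInjective g hg)).symm

theorem natLength_bot : natLength A (⊥ : Submodule A M) = 0 := by
  rw [natLength, Module.length_eq_zero, ENat.toNat_zero]

variable [IsNoetherian A M] [IsArtinian A M]

variable (A M) in
theorem cast_natLength : (natLength A M : ℕ∞) = Module.length A M :=
  ENat.natCast_toNat Module.length_ne_top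

theorem natLength_eq_ker_add_of_surjective {g : M →ₗ[A] N} (hg : Function.Surjective g) :
    natLength A M = natLength A (LinearMap.ker g) + natLength A N := by
  have := isNoetherian_of_surjective g (LinearMap.range_eq_top.2 hg)
  have := isArtinian_of_surjective M g hg
  have h := Module.length_eq_add_of_exact (LinearMap.ker g).subtype g Subtype.val_injective hg
    (LinearMap.exact_subtype_ker_map g)
  simp only [← cast_natLength] at h
  exact_mod_cast h

theorem natLength_eq_submodule_add_quotient (p : Submodule A M) :
    natLength A M = natLength A p + natLength A (M ⧸ p) := by
  rw [natLength_eq_ker_add_of_surjective p.mkQ_surjective,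
    natLength_congr (LinearEquiv.ofEq _ _ p.ker_mkQ)]

variable (A M) in
theorem natLength_pos [Nontrivial M] : 0 < natLength A M := by
  rw [← ENat.natCast_lt_natCast, cast_natLength, Nat.cast_zero]
  exact Module.length_pos

theorem natLength_pos_iff_nontrivial : 0 < natLength A M ↔ Nontrivial M := by
  rw [← Module.length_pos_iff (R := A), ← cast_natLength, Nat.cast_pos]

theorem natLength_eq_one_iff_isSimpleModule : natLength A M = 1 ↔ IsSimpleModule A M := by
  rw [← Module.length_eq_one_iff (R := A), ← cast_natLength, Nat.cast_eq_one]

theorem natLength_submodule_le (p : Submodule A M) : natLength A p ≤ natLength A M :=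
  natLength_eq_submodule_add_quotient p ▸ Nat.le_add_right _ _

theorem natLength_le_of_injective {g : N →ₗ[A] M} (hg : Function.Injective g) :
    natLength A N ≤ natLength A M :=
  natLength_range_of_injective hg ▸ natLength_submodule_le _

theorem natLength_submodule_mono {p q : Submodule A M} (h : p ≤ q) :
    natLength A p ≤ natLength A q :=
  natLength_le_of_injective (Submodule.inclusion_injective h)

theorem natLength_submodule_lt_of_lt {p q : Submodule A M} (h : p < q) :
    natLength A p < natLength A q := by
  have : Nontrivial (q ⧸ p.comap q.subtype) :=
    Submodule.Quotient.nontrivial_iff.2 fun htop =>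
      h.not_ge (Submodule.comap_subtype_eq_top.1 htop)
  rw [natLength_eq_submodule_add_quotient (p.comap q.subtype),
    natLength_congr (Submodule.comapSubtypeEquivOfLe h.le)]
  exact Nat.lt_add_of_pos_right (natLength_pos A _)

theorem eq_of_le_of_natLength_eq {p q : Submodule A M} (h : p ≤ q)
    (hpq : natLength A p = natLength A q) : p = q :=
  h.eq_of_not_lt fun hlt => (natLength_submodule_lt_of_lt hlt).ne hpq

theorem eq_top_of_natLength_eq {p : Submodule A M} (h : natLength A p = natLength A M) : p = ⊤ :=
  eq_of_le_of_natLength_eq le_top (h.trans (natLength_congr Submodule.topEquiv).symm)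

theorem bijective_of_surjective_of_natLength_eq {g : M →ₗ[A] N} (hg : Function.Surjective g)
    (h : natLength A M = natLength A N) : Function.Bijective g := by
  refine ⟨LinearMap.ker_eq_bot.1 (eq_of_le_of_natLength_eq bot_le ?_).symm, hg⟩
  have := natLength_eq_ker_add_of_surjective hg
  rw [natLength_bot]
  omega

theorem bijective_of_injective_of_natLength_eq {g : N →ₗ[A] M} (hg : Function.Injective g)
    (h : natLength A N = natLength A M) : Function.Bijective g :=
  ⟨hg, LinearMap.range_eq_top.1
    (eq_top_of_natLength_eq ((natLength_range_of_injective hg).trans h))⟩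

theorem exists_submodule_natLength_eq {l : ℕ} (hl : l ≤ natLength A M) :
    ∃ p : Submodule A M, natLength A p = l := by
  induction hl using Nat.decreasingInduction with
  | self => exact ⟨⊤, natLength_congr Submodule.topEquiv⟩
  | of_succ l _ ih =>
    obtain ⟨p, hp⟩ := ih
    have : Nontrivial p := natLength_pos_iff_nontrivial.1 (by rw [hp]; exact l.succ_pos)
    obtain ⟨m, hm⟩ := IsCoatomic.exists_coatom (Submodule A p)
    have hquot : natLength A (p ⧸ m) = 1 :=
      natLength_eq_one_iff_isSimpleModule.2 (isSimpleModule_iff_isCoatom.2 hm)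
    refine ⟨m.map p.subtype, ?_⟩
    rw [← natLength_congr (Submodule.equivMapOfInjective _ p.injective_subtype m)]
    have := natLength_eq_submodule_add_quotient m
    omega

end Length

section Uniserial

variable (A : Type*) [Ring A]

/-- The unbundled form of `IsUniserial`: the submodules of `M` form a chain. -/
def IsUniserialModule (M : Type*) [AddCommGroup M] [Module A M] : Prop :=
  ∀ p q : Submodule A M, p ≤ q ∨ q ≤ p

variable {A} {M N : Type*} [AddCommGroup M] [Module A M] [AddCommGroup N] [Module A N]

namespace IsUniserialModule

theorem of_surjective (hM : IsUniserialModule A M) {g : M →ₗ[A] N} (hg : Function.Surjective g) :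
    IsUniserialModule A N := fun p q =>
  (hM (p.comap g) (q.comap g)).imp (Submodule.comap_le_comap_iff_of_surjective hg).1
    (Submodule.comap_le_comap_iff_of_surjective hg).1

theorem submodule (hM : IsUniserialModule A M) (p : Submodule A M) : IsUniserialModule A p :=
  fun q r => (hM (q.map p.subtype) (r.map p.subtype)).imp
    (Submodule.map_le_map_iff_of_injective p.injective_subtype q r).1
    (Submodule.map_le_map_iff_of_injective p.injective_subtype r q).1

variable [IsNoetherian A M] [IsArtinian A M]

theorem le_of_natLength_le (hM : IsUniserialModule A M) {p q : Submodule A M}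
    (h : natLength A p ≤ natLength A q) : p ≤ q :=
  (hM p q).elim id fun hqp =>
    (eq_of_le_of_natLength_eq hqp (le_antisymm (natLength_submodule_mono hqp) h)).ge

theorem eq_of_natLength_eq (hM : IsUniserialModule A M) {p q : Submodule A M}
    (h : natLength A p = natLength A q) : p = q :=
  le_antisymm (hM.le_of_natLength_le h.le) (hM.le_of_natLength_le h.ge)

variable {N' : Type*} [AddCommGroup N'] [Module A N']

theorem ker_eq_ker (hM : IsUniserialModule A M) {g : M →ₗ[A] N} (hg : Function.Surjective g)
    {g' : M →ₗ[A] N'} (hg' : Function.Surjective g') (h : natLength A N = natLength A N') :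
    LinearMap.ker g = LinearMap.ker g' := by
  apply hM.eq_of_natLength_eq
  have := natLength_eq_ker_add_of_surjective hg
  have := natLength_eq_ker_add_of_surjective hg'
  omega

theorem nonempty_equiv_of_surjective (hM : IsUniserialModule A M) {g : M →ₗ[A] N}
    (hg : Function.Surjective g) {g' : M →ₗ[A] N'} (hg' : Function.Surjective g')
    (h : natLength A N = natLength A N') : Nonempty (N ≃ₗ[A] N') :=
  ⟨(g.quotKerEquivOfSurjective hg).symm.trans
    ((Submodule.quotEquivOfEq _ _ (hM.ker_eq_ker hg hg' h)).trans
      (g'.quotKerEquivOfSurjective hg'))⟩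

end IsUniserialModule

end Uniserial

section Indecomposable

variable {A : Type} [Ring A] [IsArtinianRing A]

theorem natLength_lt_of_isCompl {M : Type*} [AddCommGroup M] [Module A M] [Module.Finite A M]
    {p q : Submodule A M} (h : IsCompl p q) (hq : q ≠ ⊥) : natLength A p < natLength A M := by
  rw [← natLength_congr (Submodule.topEquiv (R := A) (M := M))]
  exact natLength_submodule_lt_of_lt
    (lt_top_iff_ne_top.2 fun hp => hq (top_disjoint.1 (hp ▸ h.disjoint)))

theorem induction_on_indecomposables
    {motive : ∀ (M : Type) [AddCommGroup M] [Module A M], Prop}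
    (subsingleton : ∀ (M : Type) [AddCommGroup M] [Module A M], Subsingleton M → motive M)
    (indec : ∀ (M : Type) [AddCommGroup M] [Module A M], Module.Finite A M →
      Indec A (ModuleCat.of A M) → motive M)
    (isCompl : ∀ (M : Type) [AddCommGroup M] [Module A M] (p q : Submodule A M),
      IsCompl p q → motive p → motive q → motive M)
    (M : Type) [AddCommGroup M] [Module A M] [Module.Finite A M] : motive M := by
  induction hl : natLength A M using Nat.strong_induction_on generalizing M with
  | _ l ih =>
    subst hl
    rcases subsingleton_or_nontrivial M with hM | hM
    · exact subsingleton M hM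
    by_cases hindec : Indec A (ModuleCat.of A M)
    · exact indec M inferInstance hindec
    · obtain ⟨p, q, hpq, hp, hq⟩ : ∃ p q : Submodule A M, IsCompl p q ∧ p ≠ ⊥ ∧ q ≠ ⊥ := by
        by_contra! hall
        exact hindec ⟨hM, fun p q hpq => or_iff_not_imp_left.2 (hall p q hpq)⟩
      exact isCompl M p q hpq (ih _ (natLength_lt_of_isCompl hpq hq) p rfl)
        (ih _ (natLength_lt_of_isCompl hpq.symm hp) q rfl)

theorem finProDim_le_iff {m : ℕ} : finProDim A ≤ m ↔
    ∀ (M : Type) [AddCommGroup M] [Module A M], Module.Finite A M →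
      Indec A (ModuleCat.of A M) → pd A M ≠ ⊤ → pd A M ≤ m := by
  constructor
  · intro h M _ _ hM _ hpd
    exact (pd_le_finProDim hpd).trans h
  · intro h
    refine sSup_le ?_
    rintro _ ⟨M, hM, rfl, hpd⟩
    revert hpd
    refine induction_on_indecomposables (motive := fun M _ _ => pd A M ≠ ⊤ → pd A M ≤ m)
      ?_ (fun M _ _ => h M) ?_ M
    · intro M _ _ _ _
      exact (pd_le_zero_iff.2 inferInstance).trans zero_le
    · intro M _ _ p q hpq hp hq hpd
      have pd_summand_ne_top {p q : Submodule A M} (hpq : IsCompl p q) : pd A p ≠ ⊤ :=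
        ne_top_of_le_ne_top hpd (pd_le_pd_of_leftInverse (i := p.subtype)
          (r := p.projectionOnto q hpq) (Submodule.projectionOnto_apply_left hpq))
      refine pd_le_of_submodule_of_quotient p (hp (pd_summand_ne_top hpq)) ?_
      rw [pd_congr (Submodule.quotientEquivOfIsCompl p q hpq)]
      exact hq (pd_summand_ne_top hpq.symm)

end Indecomposable

section InjectiveCogenerator

variable (A : Type) [Ring A]

/-- `t` generates a simple essential submodule: it is nonzero and lies in every nonzero submodule.
Indecomposable injective hulls are replaced by quotients with such an element. -/
def IsEssentialElement {M : Type*} [AddCommGroup M] [Module A M] (t : M) : Prop :=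
  t ≠ 0 ∧ ∀ p : Submodule A M, p ≠ ⊥ → t ∈ p

/-- Injective cogenerators, characterised among injective modules by containing a copy of every
simple module. -/
structure IsInjectiveCogenerator (Q : Type) [AddCommGroup Q] [Module A Q] : Prop where
  injective : Module.Injective A Q
  exists_injective : ∀ (T : Type) [AddCommGroup T] [Module A T], IsSimpleModule A T →
    ∃ s : T →ₗ[A] Q, Function.Injective s

variable {A} {M N T Q : Type} [AddCommGroup M] [Module A M] [AddCommGroup N] [Module A N]
  [AddCommGroup T] [Module A T] [AddCommGroup Q] [Module A Q]

theorem exists_isEssentialElement_mkQ {t : M} (ht : t ≠ 0) :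
    ∃ K : Submodule A M, IsEssentialElement A (K.mkQ t) := by
  obtain ⟨K, -, hK⟩ := zorn_le_nonempty₀ {K : Submodule A M | t ∉ K}
    (fun c hc hchain y hy => ⟨sSup c, fun hmem => by
      obtain ⟨z, hz, hz'⟩ := (Submodule.mem_sSup_of_directed ⟨y, hy⟩ hchain.directedOn).1 hmem
      exact hc hz hz', fun z hz => le_sSup hz⟩)
    ⊥ (mt (Submodule.mem_bot A).1 ht)
  refine ⟨K, fun h => hK.1 ((Submodule.Quotient.mk_eq_zero K).1 h), fun p hp => ?_⟩
  by_contra htp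
  have hle : p.comap K.mkQ ≤ K := hK.2 htp (K.le_comap_mkQ p)
  refine hp (le_bot_iff.1 ?_)
  rw [← Submodule.map_comap_eq_of_surjective K.mkQ_surjective p, ← K.mkQ_map_self]
  exact Submodule.map_mono hle

theorem IsEssentialElement.indec {t : M} (ht : IsEssentialElement A t) :
    Indec A (ModuleCat.of A M) := by
  refine ⟨⟨t, 0, ht.1⟩, fun p q hpq => ?_⟩
  by_contra! h
  exact ht.1 (Submodule.disjoint_def.1 hpq.disjoint t (ht.2 p h.1) (ht.2 q h.2))

theorem IsEssentialElement.submodule {t : M} (ht : IsEssentialElement A t) {p : Submodule A M}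
    (hp : p ≠ ⊥) : IsEssentialElement A (⟨t, ht.2 p hp⟩ : p) := by
  refine ⟨fun h => ht.1 (congrArg Subtype.val h), fun q hq => ?_⟩
  obtain ⟨x, hx, hxt⟩ := ht.2 (q.map p.subtype) fun h =>
    hq (Submodule.map_injective_of_injective p.injective_subtype
      (h.trans (Submodule.map_bot _).symm))
  exact (Subtype.ext hxt : x = ⟨t, _⟩) ▸ hx

theorem IsEssentialElement.isUniserialModule_submodule (hNak : IsNakayama A) {t : M}
    (ht : IsEssentialElement A t) (p : Submodule A M) [hp : Module.Finite A p] :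
    IsUniserialModule A p := by
  obtain rfl | hbot := eq_or_ne p ⊥
  · exact fun q r => .inl (Subsingleton.elim q r).le
  · exact hNak (.of A p) hp (ht.submodule hbot).indec

theorem IsUniserialModule.injective_of_isAtom (hM : IsUniserialModule A M) {p : Submodule A M}
    (hp : IsAtom p) {g : M →ₗ[A] N} (hg : ¬ p ≤ LinearMap.ker g) : Function.Injective g :=
  LinearMap.ker_eq_bot.1
    (hp.2 _ (lt_of_le_not_ge ((hM (LinearMap.ker g) p).resolve_right hg) hg))

theorem exists_quotient_forall_injective (hQ : IsInjectiveCogenerator A Q) [IsSimpleModule A T] :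
    ∃ K : Submodule A Q, (∃ t : Q ⧸ K, IsEssentialElement A t) ∧
      ∀ (M : Type) [AddCommGroup M] [Module A M], IsUniserialModule A M →
        ∀ j : T →ₗ[A] M, Function.Injective j →
          ∃ F : M →ₗ[A] Q, Function.Injective (K.mkQ ∘ₗ F) := by
  obtain ⟨s, hs⟩ := hQ.exists_injective T inferInstance
  have : Nontrivial T := IsSimpleModule.nontrivial A T
  obtain ⟨t, ht⟩ := exists_ne (0 : T)
  obtain ⟨K, hK⟩ := exists_isEssentialElement_mkQ (A := A) ((map_ne_zero_iff s hs).2 ht)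
  refine ⟨K, ⟨_, hK⟩, fun M _ _ hM j hj => ?_⟩
  obtain ⟨F, hF⟩ := hQ.injective.out j hj s
  have range_isAtom : IsAtom (LinearMap.range j) :=
    isSimpleModule_iff_isAtom.1 (IsSimpleModule.congr (LinearEquiv.ofInjective j hj).symm)
  refine ⟨F, hM.injective_of_isAtom range_isAtom fun hle => hK.1 ?_⟩
  rw [← hF]
  exact hle ⟨t, rfl⟩

variable [IsArtinianRing A]

theorem IsUniserialModule.nonempty_equiv_of_injective (hNak : IsNakayama A)
    (hQ : IsInjectiveCogenerator A Q) [IsSimpleModule A T] [Module.Finite A M] [Module.Finite A N]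
    (hM : IsUniserialModule A M) (hN : IsUniserialModule A N) {i : T →ₗ[A] M}
    (hi : Function.Injective i) {j : T →ₗ[A] N} (hj : Function.Injective j)
    (hl : natLength A M = natLength A N) : Nonempty (M ≃ₗ[A] N) := by
  obtain ⟨K, ⟨t, ht⟩, hK⟩ := exists_quotient_forall_injective (T := T) hQ
  obtain ⟨F, hF⟩ := hK M hM i hi
  obtain ⟨G, hG⟩ := hK N hN j hj
  let V := LinearMap.range (K.mkQ ∘ₗ F) ⊔ LinearMap.range (K.mkQ ∘ₗ G)
  let F' : M →ₗ[A] V := (K.mkQ ∘ₗ F).codRestrict V fun x => Submodule.mem_sup_left ⟨x, rfl⟩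
  let G' : N →ₗ[A] V := (K.mkQ ∘ₗ G).codRestrict V fun x => Submodule.mem_sup_right ⟨x, rfl⟩
  have hF' : Function.Injective F' := Function.Injective.of_comp (f := V.subtype) hF
  have hG' : Function.Injective G' := Function.Injective.of_comp (f := V.subtype) hG
  have range_eq : LinearMap.range F' = LinearMap.range G' :=
    (ht.isUniserialModule_submodule hNak V).eq_of_natLength_eq
      (by rw [natLength_range_of_injective hF', hl, natLength_range_of_injective hG'])
  exact ⟨(LinearEquiv.ofInjective F' hF').trans
    ((LinearEquiv.ofEq _ _ range_eq).trans (LinearEquiv.ofInjective G' hG').symm)⟩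

theorem IsUniserialModule.exists_leftInverse_of_natLength_maximal (hNak : IsNakayama A)
    (hQ : IsInjectiveCogenerator A Q) [Module.Finite A M] [Nontrivial M]
    (hM : IsUniserialModule A M)
    (hmax : ∀ (V : Type) [AddCommGroup V] [Module A V], Module.Finite A V →
      IsUniserialModule A V → (∃ j : M →ₗ[A] V, Function.Injective j) →
      natLength A V ≤ natLength A M) :
    ∃ (i : M →ₗ[A] Q) (r : Q →ₗ[A] M), Function.LeftInverse r i := by
  obtain ⟨T, hT⟩ := IsAtomic.exists_atom (Submodule A M)
  have := isSimpleModule_iff_isAtom.2 hT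
  obtain ⟨K, ⟨t, ht⟩, hK⟩ := exists_quotient_forall_injective (T := T) hQ
  obtain ⟨F, hF⟩ := hK M hM T.subtype T.injective_subtype
  have surjective : Function.Surjective (K.mkQ ∘ₗ F) := by
    intro e
    let V := LinearMap.range (K.mkQ ∘ₗ F) ⊔ Submodule.span A {e}
    let F' : M →ₗ[A] V := (K.mkQ ∘ₗ F).codRestrict V fun x => Submodule.mem_sup_left ⟨x, rfl⟩
    have hF' : Function.Injective F' := Function.Injective.of_comp (f := V.subtype) hF
    have hV := hmax V inferInstance (ht.isUniserialModule_submodule hNak V) ⟨F', hF'⟩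
    obtain ⟨x, hx⟩ := (bijective_of_injective_of_natLength_eq hF'
      (le_antisymm (natLength_le_of_injective hF') hV)).2
      ⟨e, Submodule.mem_sup_right (Submodule.mem_span_singleton_self e)⟩
    exact ⟨x, congrArg Subtype.val hx⟩
  let E := LinearEquiv.ofBijective (K.mkQ ∘ₗ F) ⟨hF, surjective⟩
  exact ⟨F, E.symm.toLinearMap ∘ₗ K.mkQ, E.symm_apply_apply⟩

end InjectiveCogenerator

/-- A complete irredundant family of simple modules `S i` with uniserial projective covers
`π i : P i → S i`. -/
structure SimpleCovers (A : Type) [Ring A] where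
  ι : Type
  S : ι → ModuleCat.{0} A
  P : ι → ModuleCat.{0} A
  π : ∀ i, P i →ₗ[A] S i
  finite_index : Finite ι
  isSimpleModule : ∀ i, IsSimpleModule A (S i)
  exists_equiv : ∀ (T : Type) [AddCommGroup T] [Module A T], IsSimpleModule A T →
    ∃ i, Nonempty (T ≃ₗ[A] S i)
  eq_of_equiv : ∀ i j, Nonempty (S i ≃ₗ[A] S j) → i = j
  finite : ∀ i, Module.Finite A (P i)
  projective : ∀ i, Module.Projective A (P i)
  isUniserialModule : ∀ i, IsUniserialModule A (P i)
  surjective_π : ∀ i, Function.Surjective (π i)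

namespace SimpleCovers

attribute [instance] finite_index isSimpleModule finite projective

section Covers

variable {A : Type} [Ring A] (C : SimpleCovers A)
  {M N : Type} [AddCommGroup M] [Module A M] [AddCommGroup N] [Module A N]

/-- `P i` surjects onto `M`; if `M` is nonzero this says that `P i` is its projective cover. -/
def Covers (i : C.ι) (M : Type) [AddCommGroup M] [Module A M] : Prop :=
  ∃ h : C.P i →ₗ[A] M, Function.Surjective h

variable {C}

theorem covers_P (i : C.ι) : C.Covers i (C.P i) :=
  ⟨LinearMap.id, Function.surjective_id⟩

theorem covers_S (i : C.ι) : C.Covers i (C.S i) :=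
  ⟨C.π i, C.surjective_π i⟩

theorem Covers.of_surjective {i : C.ι} (h : C.Covers i M) {g : M →ₗ[A] N}
    (hg : Function.Surjective g) : C.Covers i N :=
  let ⟨f, hf⟩ := h
  ⟨g ∘ₗ f, hg.comp hf⟩

theorem Covers.finite {i : C.ι} (h : C.Covers i M) : Module.Finite A M :=
  let ⟨f, hf⟩ := h
  Module.Finite.of_surjective f hf

theorem Covers.isUniserialModule {i : C.ι} (h : C.Covers i M) : IsUniserialModule A M :=
  let ⟨_, hf⟩ := h
  (C.isUniserialModule i).of_surjective hf

variable (C) in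
theorem exists_surjective_S (M : Type) [AddCommGroup M] [Module A M] [Module.Finite A M]
    [Nontrivial M] : ∃ (i : C.ι) (g : M →ₗ[A] C.S i), Function.Surjective g := by
  obtain ⟨m, hm⟩ := IsCoatomic.exists_coatom (Submodule A M)
  obtain ⟨i, ⟨e⟩⟩ := C.exists_equiv (M ⧸ m) (isSimpleModule_iff_isCoatom.2 hm)
  exact ⟨i, e.toLinearMap ∘ₗ m.mkQ, e.surjective.comp m.mkQ_surjective⟩

theorem exists_not_range_le_ker {i : C.ι} {g : M →ₗ[A] C.S i} (hg : Function.Surjective g) :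
    ∃ h : C.P i →ₗ[A] M, ¬ LinearMap.range h ≤ LinearMap.ker g := by
  obtain ⟨h, hh⟩ := Module.projective_lifting_property g (C.π i) hg
  have : Nontrivial (C.S i) := IsSimpleModule.nontrivial A _
  obtain ⟨y, hy⟩ := exists_ne (0 : C.S i)
  obtain ⟨x, rfl⟩ := C.surjective_π i y
  refine ⟨h, fun hle => hy ?_⟩
  rw [← hh]
  exact hle ⟨x, rfl⟩

theorem covers_of_surjective_S (hM : IsUniserialModule A M) {i : C.ι} {g : M →ₗ[A] C.S i}
    (hg : Function.Surjective g) : C.Covers i M := by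
  obtain ⟨h, hh⟩ := exists_not_range_le_ker hg
  have ker_isCoatom : IsCoatom (LinearMap.ker g) :=
    isSimpleModule_iff_isCoatom.1 (IsSimpleModule.congr (g.quotKerEquivOfSurjective hg))
  exact ⟨h, LinearMap.range_eq_top.1
    (ker_isCoatom.2 _ (lt_of_le_not_ge ((hM _ _).resolve_left hh) hh))⟩

theorem exists_covers [Module.Finite A M] [Nontrivial M] (hM : IsUniserialModule A M) :
    ∃ i, C.Covers i M :=
  let ⟨i, _, hg⟩ := C.exists_surjective_S M
  ⟨i, covers_of_surjective_S hM hg⟩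

theorem natLength_S (i : C.ι) : natLength A (C.S i) = 1 :=
  natLength_eq_one_iff_isSimpleModule.2 inferInstance

variable [IsArtinianRing A]

theorem eq_of_surjective_S [Module.Finite A M] (hM : IsUniserialModule A M) {i j : C.ι}
    {g : M →ₗ[A] C.S i} (hg : Function.Surjective g) {g' : M →ₗ[A] C.S j}
    (hg' : Function.Surjective g') : i = j :=
  C.eq_of_equiv i j (hM.nonempty_equiv_of_surjective hg hg' (by rw [natLength_S, natLength_S]))

theorem Covers.unique [Nontrivial M] {i j : C.ι} (hi : C.Covers i M) (hj : C.Covers j M) :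
    i = j := by
  have := hi.finite
  obtain ⟨k, g, hg⟩ := C.exists_surjective_S M
  have eq_top {i : C.ι} (hi : C.Covers i M) : i = k :=
    let ⟨_, hh⟩ := hi.of_surjective hg
    eq_of_surjective_S (C.isUniserialModule i) (C.surjective_π i) hh
  rw [eq_top hi, eq_top hj]

theorem Covers.nonempty_equiv {i : C.ι} (hM : C.Covers i M) (hN : C.Covers i N)
    (h : natLength A M = natLength A N) : Nonempty (M ≃ₗ[A] N) :=
  let ⟨_, hf⟩ := hM
  let ⟨_, hg⟩ := hN
  (C.isUniserialModule i).nonempty_equiv_of_surjective hf hg h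

theorem exists_quotient_natLength_eq (i : C.ι) {l : ℕ} (hl : l ≤ natLength A (C.P i)) :
    ∃ p : Submodule A (C.P i), natLength A (C.P i ⧸ p) = l := by
  obtain ⟨p, hp⟩ := exists_submodule_natLength_eq (A := A) (M := C.P i)
    (Nat.sub_le (natLength A (C.P i)) l)
  have := natLength_eq_submodule_add_quotient p
  exact ⟨p, by omega⟩

end Covers

section Arrow

variable {A : Type} [Ring A] (C : SimpleCovers A)

/-- The arrows of the quiver of `A`: `S j` is the top of the radical of `P i`. -/
def Arrow (i j : C.ι) : Prop :=
  ∃ g : LinearMap.ker (C.π i) →ₗ[A] C.S j, Function.Surjective g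

/-- A permutation of the simple modules extending the arrows of the quiver. A vertex with a
simple projective cover emits no arrow, so its image is arbitrary. -/
def IsShift (σ : Equiv.Perm C.ι) : Prop :=
  ∀ i j, C.Arrow i j → σ i = j

variable {C} {M Q : Type} [AddCommGroup M] [Module A M] [AddCommGroup Q] [Module A Q]
  [IsArtinianRing A]

theorem Arrow.right_unique {i j k : C.ι} (h : C.Arrow i j) (h' : C.Arrow i k) : j = k :=
  let ⟨_, hg⟩ := h
  let ⟨_, hg'⟩ := h'
  eq_of_surjective_S ((C.isUniserialModule i).submodule _) hg hg'

theorem Arrow.two_le_natLength {i j : C.ι} (h : C.Arrow i j) : 2 ≤ natLength A (C.P i) := by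
  obtain ⟨g, hg⟩ := h
  have hP := natLength_eq_ker_add_of_surjective (C.surjective_π i)
  have hker := natLength_eq_ker_add_of_surjective hg
  rw [natLength_S] at hP hker
  omega

theorem Covers.exists_arrow {i : C.ι} (h : C.Covers i M) {p : Submodule A M} [Nontrivial p]
    (hl : natLength A M = natLength A p + 1) : ∃ j, C.Arrow i j ∧ C.Covers j p := by
  have := h.finite
  have hM := h.isUniserialModule
  obtain ⟨j, t, ht⟩ := C.exists_surjective_S p
  refine ⟨j, ?_, covers_of_surjective_S (hM.submodule p) ht⟩
  obtain ⟨g, hg⟩ := h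
  have quotient_natLength : natLength A (C.S i) = natLength A (M ⧸ p) := by
    have := natLength_eq_submodule_add_quotient p
    rw [natLength_S]
    omega
  have ker_eq_comap : LinearMap.ker (C.π i) = p.comap g := by
    have hpg : Function.Surjective (p.mkQ ∘ₗ g) := p.mkQ_surjective.comp hg
    rw [(C.isUniserialModule i).ker_eq_ker (C.surjective_π i) hpg quotient_natLength,
      LinearMap.ker_comp, p.ker_mkQ]
  rw [Arrow, ker_eq_comap]
  exact ⟨t ∘ₗ g.submoduleComap p, ht.comp (g.submoduleComap_surjective_of_surjective p hg)⟩

theorem Covers.submodule {σ : Equiv.Perm C.ι} (hσ : C.IsShift σ) {i : C.ι} (h : C.Covers i M)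
    {p : Submodule A M} [Nontrivial p] {s : ℕ} (hl : natLength A M = natLength A p + s) :
    C.Covers ((σ ^ s) i) p := by
  have := h.finite
  induction s generalizing p with
  | zero =>
    obtain rfl : p = ⊤ := eq_top_of_natLength_eq hl.symm
    exact h.of_surjective Submodule.topEquiv.symm.surjective
  | succ s ih =>
    obtain ⟨q, hq⟩ := exists_submodule_natLength_eq (A := A) (M := M)
      (l := natLength A p + 1) (by omega)
    have hpq : p ≤ q := h.isUniserialModule.le_of_natLength_le (by omega)
    let e := Submodule.comapSubtypeEquivOfLe hpq
    have : Nontrivial q := natLength_pos_iff_nontrivial.1 (by rw [hq]; exact Nat.succ_pos _)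
    have : Nontrivial (p.comap q.subtype) := e.toEquiv.nontrivial
    obtain ⟨j, hj, hcov⟩ :=
      (ih (p := q) (by omega)).exists_arrow (p := p.comap q.subtype) (by rw [hq, natLength_congr e])
    rw [pow_succ', Equiv.Perm.mul_apply, hσ _ _ hj]
    exact hcov.of_surjective e.surjective

theorem Arrow.exists_quotient {i j : C.ι} (h : C.Arrow i j) :
    ∃ p : Submodule A (C.P i), natLength A (C.P i ⧸ p) = 2 ∧
      ∃ f : C.S j →ₗ[A] (C.P i ⧸ p), Function.Injective f := by
  obtain ⟨p, hp⟩ := exists_quotient_natLength_eq i h.two_le_natLength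
  obtain ⟨q, hq⟩ := exists_submodule_natLength_eq (A := A) (M := C.P i ⧸ p) (l := 1) (by omega)
  have : IsSimpleModule A q := natLength_eq_one_iff_isSimpleModule.1 hq
  have : Nontrivial q := IsSimpleModule.nontrivial A q
  obtain ⟨k, hk, hcov⟩ :=
    ((covers_P i).of_surjective p.mkQ_surjective).exists_arrow (by rw [hp, hq])
  obtain rfl := h.right_unique hk
  obtain ⟨e⟩ := (covers_S j).nonempty_equiv hcov (by rw [natLength_S, hq])
  exact ⟨p, hp, q.subtype ∘ₗ e.toLinearMap, q.injective_subtype.comp e.injective⟩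

theorem Arrow.left_unique (hNak : IsNakayama A) (hQ : IsInjectiveCogenerator A Q) {i i' j : C.ι}
    (h : C.Arrow i j) (h' : C.Arrow i' j) : i = i' := by
  obtain ⟨p, hp, f, hf⟩ := h.exists_quotient
  obtain ⟨p', hp', f', hf'⟩ := h'.exists_quotient
  have hcov : C.Covers i (C.P i ⧸ p) := (covers_P i).of_surjective p.mkQ_surjective
  have hcov' : C.Covers i' (C.P i' ⧸ p') := (covers_P i').of_surjective p'.mkQ_surjective
  obtain ⟨e⟩ := IsUniserialModule.nonempty_equiv_of_injective hNak hQ hcov.isUniserialModule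
    hcov'.isUniserialModule hf hf' (by rw [hp, hp'])
  have : Nontrivial (C.P i ⧸ p) := natLength_pos_iff_nontrivial (A := A).1 (hp ▸ two_pos)
  exact hcov.unique (hcov'.of_surjective e.symm.surjective)

end Arrow

end SimpleCovers

theorem exists_perm_of_rightUnique_of_leftUnique {ι : Type*} [Finite ι] {r : ι → ι → Prop}
    (hr : Relator.RightUnique r) (hl : Relator.LeftUnique r) :
    ∃ σ : Equiv.Perm ι, ∀ i j, r i j → σ i = j := by
  classical
  have := Fintype.ofFinite ι
  rcases isEmpty_or_nonempty ι with _ | _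
  · exact ⟨1, fun i => isEmptyElim i⟩
  have (i : ι) : ∃ j, (∃ k, r i k) → r i j := by
    by_cases h : ∃ k, r i k
    · exact h.imp fun _ hk _ => hk
    · exact ⟨i, fun h' => absurd h' h⟩
  choose f hf using this
  have injOn : Set.InjOn f {i | ∃ k, r i k} := fun i hi i' hi' h => hl (hf i hi) (h ▸ hf i' hi')
  obtain ⟨g, hg⟩ := Set.MapsTo.exists_equiv_extend_of_card_eq (t := Finset.univ)
    Finset.card_univ.symm (fun _ _ => Finset.mem_coe.2 (Finset.mem_univ _)) injOn
  refine ⟨g.trans (Equiv.subtypeUnivEquiv Finset.mem_univ), fun i j hij => ?_⟩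
  exact (hg i ⟨j, hij⟩).trans (hr (hf i ⟨j, hij⟩) hij)

theorem SimpleCovers.exists_isShift {A : Type} [Ring A] [IsArtinianRing A] (C : SimpleCovers A)
    {Q : Type} [AddCommGroup Q] [Module A Q] (hNak : IsNakayama A)
    (hQ : IsInjectiveCogenerator A Q) : ∃ σ, C.IsShift σ :=
  exists_perm_of_rightUnique_of_leftUnique (fun _ _ _ h h' => h.right_unique h')
    fun _ _ _ h h' => h.left_unique hNak hQ h'

section Connected

variable {A : Type} [Ring A]

theorem IsConnectedAlgebra.eq_bot_or_eq_bot (hConn : IsConnectedAlgebra A) {I J : Ideal A}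
    [I.IsTwoSided] [J.IsTwoSided] (hIJ : IsCompl I J) : I = ⊥ ∨ J = ⊥ := by
  obtain ⟨e, he, f, hf, hef⟩ := Submodule.mem_sup.1 (hIJ.sup_eq_top ▸ Submodule.mem_top (x := 1))
  obtain rfl : f = 1 - e := eq_sub_of_add_eq' hef
  have eq_zero {a : A} (hI : a ∈ I) (hJ : a ∈ J) : a = 0 :=
    Submodule.disjoint_def.1 hIJ.disjoint a hI hJ
  have idempotent : IsIdempotentElem e := by
    have hJ : e - e * e ∈ J := by
      rw [← mul_one_sub]
      exact J.mul_mem_left e hf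
    exact (sub_eq_zero.1 (eq_zero (sub_mem he (I.mul_mem_left e he)) hJ)).symm
  have central : e ∈ Set.center A := Semigroup.mem_center_iff.2 fun a => by
    have hJ : a * e - e * a ∈ J := by
      rw [show a * e - e * a = (1 - e) * a - a * (1 - e) by noncomm_ring]
      exact sub_mem (J.mul_mem_right a hf) (J.mul_mem_left a hf)
    exact sub_eq_zero.1 (eq_zero (sub_mem (I.mul_mem_left a he) (I.mul_mem_right a he)) hJ)
  rcases hConn.2 e idempotent central with rfl | rfl
  · rw [sub_zero, ← Ideal.eq_top_iff_one] at hf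
    exact .inl (disjoint_top.1 (hf ▸ hIJ.disjoint))
  · rw [← Ideal.eq_top_iff_one] at he
    exact .inr (top_disjoint.1 (he ▸ hIJ.disjoint))

theorem linearMap_sSup_eq_zero {P M : Type*} [AddCommGroup P] [Module A P] [Module.Projective A P]
    [AddCommGroup M] [Module A M] {s : Set (Submodule A M)}
    (h : ∀ p ∈ s, ∀ f : P →ₗ[A] p, f = 0) (f : P →ₗ[A] ↥(sSup s)) : f = 0 := by
  classical
  let sum : (Π₀ p : s, p.1) →ₗ[A] ↥(sSup s) :=
    (DFinsupp.lsum ℕ fun p : s => p.1.subtype).codRestrict (sSup s) fun x => by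
      rw [sSup_eq_iSup', Submodule.iSup_eq_range_dfinsupp_lsum]
      exact ⟨x, rfl⟩
  have sum_surjective : Function.Surjective sum := fun ⟨y, hy⟩ => by
    rw [sSup_eq_iSup', Submodule.iSup_eq_range_dfinsupp_lsum] at hy
    obtain ⟨x, hx⟩ := hy
    exact ⟨x, Subtype.ext hx⟩
  obtain ⟨lift, rfl⟩ := Module.projective_lifting_property sum f sum_surjective
  have : lift = 0 := by
    ext1 x
    ext1 p
    exact LinearMap.congr_fun (h p.1 p.2 (DFinsupp.lapply p ∘ₗ lift)) x
  rw [this, LinearMap.comp_zero]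

end Connected

namespace SimpleCovers

variable {A : Type} [Ring A] (C : SimpleCovers A)
  {M N : Type} [AddCommGroup M] [Module A M] [AddCommGroup N] [Module A N]

/-- The sum of the images in `M` of the projectives `P i` with `i ∈ O`. -/
def trace (O : Set C.ι) (M : Type) [AddCommGroup M] [Module A M] : Submodule A M :=
  sSup {p | ∃ i ∈ O, C.Covers i p}

variable {C} {O : Set C.ι}

theorem range_le_trace {i : C.ι} (hi : i ∈ O) (f : C.P i →ₗ[A] M) :
    LinearMap.range f ≤ C.trace O M :=
  le_sSup ⟨i, hi, f.rangeRestrict, f.surjective_rangeRestrict⟩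

theorem map_trace_le (g : M →ₗ[A] N) : (C.trace O M).map g ≤ C.trace O N := by
  rw [trace, Submodule.map_le_iff_le_comap, sSup_le_iff]
  rintro p ⟨i, hi, f, hf⟩
  rw [← Submodule.map_le_iff_le_comap, ← Submodule.range_subtype p, ← LinearMap.range_comp,
    ← LinearMap.range_comp_of_range_eq_top _ (LinearMap.range_eq_top.2 hf)]
  exact range_le_trace hi _

instance isTwoSided_trace : Ideal.IsTwoSided (C.trace O A) :=
  ⟨fun {a} b ha => map_trace_le (LinearMap.toSpanSingleton A A b) ⟨a, ha, rfl⟩⟩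

theorem codisjoint_trace_compl [Module.Finite A M] :
    Codisjoint (C.trace O M) (C.trace Oᶜ M) := by
  rw [codisjoint_iff]
  by_contra htop
  have : Nontrivial (M ⧸ C.trace O M ⊔ C.trace Oᶜ M) := Submodule.Quotient.nontrivial_iff.2 htop
  obtain ⟨i, g, hg⟩ := C.exists_surjective_S (M ⧸ C.trace O M ⊔ C.trace Oᶜ M)
  have surjective : Function.Surjective (g ∘ₗ Submodule.mkQ _) :=
    hg.comp (Submodule.mkQ_surjective _)
  obtain ⟨h, hh⟩ := exists_not_range_le_ker surjective
  have range_le : LinearMap.range h ≤ C.trace O M ⊔ C.trace Oᶜ M := by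
    by_cases hi : i ∈ O
    · exact le_sup_of_le_left (range_le_trace hi h)
    · exact le_sup_of_le_right (range_le_trace hi h)
  refine hh (range_le.trans ?_)
  rw [LinearMap.ker_comp]
  exact Submodule.le_comap_mkQ _ _

theorem exists_linearMap_ring_ne_zero (i : C.ι) : ∃ f : C.P i →ₗ[A] A, f ≠ 0 := by
  have : Nontrivial (C.S i) := IsSimpleModule.nontrivial A _
  obtain ⟨y, hy⟩ := exists_ne (0 : C.S i)
  obtain ⟨f, hf⟩ := exists_not_range_le_ker (IsSimpleModule.toSpanSingleton_surjective A hy)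
  exact ⟨f, fun h0 => hf (by rw [h0, LinearMap.range_zero]; exact bot_le)⟩

variable [IsArtinianRing A] {σ : Equiv.Perm C.ι}

theorem exists_pow_apply_eq_of_linearMap_ne_zero (hσ : C.IsShift σ) {i j : C.ι}
    {h : C.P i →ₗ[A] C.P j} (h0 : h ≠ 0) : ∃ s : ℕ, (σ ^ s) j = i := by
  have : Nontrivial (LinearMap.range h) :=
    Submodule.nontrivial_iff_ne_bot.2 (mt LinearMap.range_eq_bot.1 h0)
  obtain ⟨s, hs⟩ := Nat.exists_eq_add_of_le (natLength_submodule_le (LinearMap.range h))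
  have covers_range : C.Covers i (LinearMap.range h) :=
    ⟨h.rangeRestrict, h.surjective_rangeRestrict⟩
  exact ⟨s, ((covers_P j).submodule hσ hs).unique covers_range⟩

theorem linearMap_trace_eq_zero (hσ : C.IsShift σ) (hO : ∀ j ∈ O, ∀ s : ℕ, (σ ^ s) j ∈ O)
    {i : C.ι} (hi : i ∉ O) (f : C.P i →ₗ[A] C.trace O M) : f = 0 := by
  refine linearMap_sSup_eq_zero ?_ f
  rintro p ⟨j, hj, g, hg⟩ f
  obtain ⟨h, rfl⟩ := Module.projective_lifting_property g f hg
  suffices h = 0 by rw [this, LinearMap.comp_zero]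
  by_contra h0
  obtain ⟨s, rfl⟩ := exists_pow_apply_eq_of_linearMap_ne_zero hσ h0
  exact hi (hO j hj s)

theorem disjoint_trace_compl [Module.Finite A M] (hσ : C.IsShift σ)
    (hO : ∀ (j : C.ι) (s : ℕ), (σ ^ s) j ∈ O ↔ j ∈ O) :
    Disjoint (C.trace O M) (C.trace Oᶜ M) := by
  rw [disjoint_iff]
  by_contra hbot
  have : Nontrivial ↥(C.trace O M ⊓ C.trace Oᶜ M) := Submodule.nontrivial_iff_ne_bot.2 hbot
  obtain ⟨i, g, hg⟩ := C.exists_surjective_S ↥(C.trace O M ⊓ C.trace Oᶜ M)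
  obtain ⟨f, hf⟩ := exists_not_range_le_ker hg
  suffices f = 0 from hf (by rw [this, LinearMap.range_zero]; exact bot_le)
  by_cases hi : i ∈ O
  · have := linearMap_trace_eq_zero hσ (O := Oᶜ) (fun j hj s => mt (hO j s).1 hj) (not_not.2 hi)
      (Submodule.inclusion inf_le_right ∘ₗ f)
    exact LinearMap.ext fun x =>
      Submodule.inclusion_injective inf_le_right (LinearMap.congr_fun this x)
  · have := linearMap_trace_eq_zero hσ (fun j hj s => (hO j s).2 hj) hi
      (Submodule.inclusion inf_le_left ∘ₗ f)
    exact LinearMap.ext fun x =>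
      Submodule.inclusion_injective inf_le_left (LinearMap.congr_fun this x)

theorem IsShift.sameCycle (hσ : C.IsShift σ) (hConn : IsConnectedAlgebra A) (i j : C.ι) :
    σ.SameCycle i j := by
  let O : Set C.ι := {k | σ.SameCycle i k}
  have hO (k : C.ι) (s : ℕ) : (σ ^ s) k ∈ O ↔ k ∈ O := Equiv.Perm.sameCycle_pow_right
  have trace_ne_bot {O : Set C.ι} {k : C.ι} (hk : k ∈ O) : C.trace O A ≠ ⊥ := fun h => by
    obtain ⟨f, hf⟩ := C.exists_linearMap_ring_ne_zero k
    exact hf (LinearMap.range_eq_bot.1 (le_bot_iff.1 (h ▸ range_le_trace hk f)))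
  by_contra hj
  exact (hConn.eq_bot_or_eq_bot ⟨disjoint_trace_compl hσ hO, codisjoint_trace_compl⟩).elim
    (trace_ne_bot (Equiv.Perm.SameCycle.refl σ i)) (trace_ne_bot (O := Oᶜ) hj)

end SimpleCovers

/-- The `n`-th term of the sequence `i, j, f i, f j, f (f i), f (f j), …`, whose consecutive terms
are the end points of the syzygies of the interval `[i, j)`. -/
def syzygyBound (f : ℤ → ℤ) : ℕ → ℤ → ℤ → ℤ
  | 0, i, _ => i
  | n + 1, i, j => syzygyBound f n j (f i)

theorem syzygyBound_two_mul (f : ℤ → ℤ) (k : ℕ) (i j : ℤ) :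
    syzygyBound f (2 * k) i j = f^[k] i := by
  induction k generalizing i j with
  | zero => rfl
  | succ _ ih => exact ih (f i) (f j)

theorem syzygyBound_two_mul_add_one (f : ℤ → ℤ) (k : ℕ) (i j : ℤ) :
    syzygyBound f (2 * k + 1) i j = f^[k] j :=
  syzygyBound_two_mul f k j (f i)

theorem syzygyBound_self (f : ℤ → ℤ) (n : ℕ) (i : ℤ) :
    syzygyBound f n i i = syzygyBound f (n + 1) i i ∨
      syzygyBound f (n + 1) i i = syzygyBound f (n + 2) i i := by
  obtain ⟨k, rfl | rfl⟩ := n.even_or_odd'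
  · exact .inl ((syzygyBound_two_mul f k i i).trans (syzygyBound_two_mul_add_one f k i i).symm)
  · exact .inr ((syzygyBound_two_mul f (k + 1) i i).trans
      (syzygyBound_two_mul_add_one f (k + 1) i i).symm)

namespace SimpleCovers

variable {A : Type} [Ring A] (C : SimpleCovers A) (σ : Equiv.Perm C.ι) (y : C.ι)

/-- The Kupisch series of `A` as a self-map of `ℤ`: the projective cover of the simple module at
position `t`, which is `S ((σ ^ t) y)`, is the interval module `[t, f t)`. -/
def kupischMap : ℤ →+c[(orderOf σ : ℤ), (orderOf σ : ℤ)] ℤ where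
  toFun t := t + natLength A (C.P ((σ ^ t) y))
  map_add_const' t := by
    rw [zpow_add, zpow_natCast, pow_orderOf_eq_one, mul_one, add_right_comm]

/-- `M` is the interval module `[i, j)`: from the top down, its composition factors are the
`S ((σ ^ t) y)` with `t = i, …, j - 1`. -/
structure IsInterval (i j : ℤ) (M : Type) [AddCommGroup M] [Module A M] : Prop where
  covers : C.Covers ((σ ^ i) y) M
  natLength_eq : (natLength A M : ℤ) = j - i
  lt : i < j

variable {C σ y} {M N Q : Type} [AddCommGroup M] [Module A M] [AddCommGroup N] [Module A N]
  [AddCommGroup Q] [Module A Q] {i j : ℤ}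

theorem kupischMap_apply (t : ℤ) :
    C.kupischMap σ y t = t + natLength A (C.P ((σ ^ t) y)) :=
  rfl

theorem IsInterval.finite (h : C.IsInterval σ y i j M) : Module.Finite A M :=
  h.covers.finite

theorem isInterval_S (t : ℤ) : C.IsInterval σ y t (t + 1) (C.S ((σ ^ t) y)) :=
  ⟨covers_S _, by rw [natLength_S]; simp, lt_add_one t⟩

theorem exists_kupischMap_pred_lt (hj : j ≤ C.kupischMap σ y i) :
    ∃ a ≤ i, j ≤ C.kupischMap σ y a ∧ C.kupischMap σ y (a - 1) < j := by
  have := C.finite_index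
  obtain ⟨b, hb⟩ := Finite.exists_le fun i => natLength A (C.P i)
  obtain ⟨a, ha, hmin⟩ := Int.exists_least_of_bdd (P := fun t => j ≤ C.kupischMap σ y t)
    ⟨j - b, fun t ht => by
      rw [kupischMap_apply] at ht
      have := hb ((σ ^ t) y)
      omega⟩ ⟨i, hj⟩
  exact ⟨a, hmin i hj, ha, lt_of_not_ge fun h => by have := hmin _ h; omega⟩

variable [IsArtinianRing A]

theorem IsInterval.nontrivial (h : C.IsInterval σ y i j M) : Nontrivial M := by
  have := h.finite
  have := h.lt
  have := h.natLength_eq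
  exact natLength_pos_iff_nontrivial (A := A).1 (by omega)

theorem lt_kupischMap (t : ℤ) : t < C.kupischMap σ y t := by
  have : Nontrivial (C.S ((σ ^ t) y)) := IsSimpleModule.nontrivial A _
  have := (C.surjective_π ((σ ^ t) y)).nontrivial
  have := natLength_pos A (C.P ((σ ^ t) y))
  rw [kupischMap_apply]
  omega

theorem IsInterval.le_kupischMap (h : C.IsInterval σ y i j M) : j ≤ C.kupischMap σ y i := by
  obtain ⟨g, hg⟩ := h.covers
  have := natLength_eq_ker_add_of_surjective hg
  have := h.natLength_eq
  rw [kupischMap_apply]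
  omega

theorem exists_isInterval_quotient (hij : i < j) (hj : j ≤ C.kupischMap σ y i) :
    ∃ p : Submodule A (C.P ((σ ^ i) y)), C.IsInterval σ y i j (C.P ((σ ^ i) y) ⧸ p) := by
  rw [kupischMap_apply] at hj
  obtain ⟨p, hp⟩ := exists_quotient_natLength_eq ((σ ^ i) y) (l := (j - i).toNat) (by omega)
  exact ⟨p, (covers_P _).of_surjective p.mkQ_surjective, by omega, hij⟩

theorem isInterval_P (t : ℤ) : C.IsInterval σ y t (C.kupischMap σ y t) (C.P ((σ ^ t) y)) :=
  ⟨covers_P _, by rw [kupischMap_apply]; ring, lt_kupischMap t⟩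

theorem IsInterval.submodule (hσ : C.IsShift σ) (h : C.IsInterval σ y i j M) {p : Submodule A M}
    {k : ℤ} (hk : k < j) (hp : (natLength A p : ℤ) = j - k) : C.IsInterval σ y k j p := by
  have := h.finite
  have : Nontrivial p := natLength_pos_iff_nontrivial (A := A).1 (by omega)
  have hM := h.natLength_eq
  obtain ⟨s, hs⟩ := Nat.exists_eq_add_of_le (natLength_submodule_le p)
  obtain rfl : k = s + i := by omega
  refine ⟨?_, hp, hk⟩
  rw [zpow_add, zpow_natCast]
  exact h.covers.submodule hσ hs

theorem monotone_kupischMap (hσ : C.IsShift σ) : Monotone (C.kupischMap σ y) := by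
  refine monotone_int_of_le_succ fun t => ?_
  rcases (Int.add_one_le_iff.2 (lt_kupischMap (σ := σ) (y := y) t)).eq_or_lt with h | h
  · exact h ▸ (lt_kupischMap (t + 1)).le
  · have ht := isInterval_P (σ := σ) (y := y) t
    have := ht.natLength_eq
    obtain ⟨p, hp⟩ := exists_submodule_natLength_eq (A := A) (M := C.P ((σ ^ t) y))
      (l := (C.kupischMap σ y t - (t + 1)).toNat) (by omega)
    exact (ht.submodule hσ h (p := p) (by omega)).le_kupischMap

theorem IsInterval.projective_iff (h : C.IsInterval σ y i j M) :
    Module.Projective A M ↔ j = C.kupischMap σ y i := by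
  have := h.nontrivial
  have hM := h.natLength_eq
  rw [kupischMap_apply]
  obtain ⟨g, hg⟩ := h.covers
  have hP := natLength_eq_ker_add_of_surjective hg
  constructor
  · intro hproj
    obtain ⟨s, hs⟩ := Module.projective_lifting_property g LinearMap.id hg
    have disjoint : Disjoint (LinearMap.ker g) (LinearMap.range s) := by
      rw [Submodule.disjoint_def]
      rintro _ hx ⟨x, rfl⟩
      rw [← LinearMap.id_apply (R := A) x, ← hs, LinearMap.comp_apply, LinearMap.mem_ker.1 hx,
        map_zero]
    have ker_eq_bot : LinearMap.ker g = ⊥ :=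
      (C.isUniserialModule _ (LinearMap.ker g) (LinearMap.range s)).elim disjoint.eq_bot_of_le
        fun hle => absurd ((LinearMap.range_le_ker_iff.1 hle).symm.trans hs) zero_ne_one
    rw [ker_eq_bot, natLength_bot] at hP
    omega
  · intro hj
    exact .of_equiv (.ofBijective g (bijective_of_surjective_of_natLength_eq hg (by omega)))

theorem IsInterval.exists_syzygy (hσ : C.IsShift σ) (h : C.IsInterval σ y i j M)
    (hj : j ≠ C.kupischMap σ y i) :
    ∃ p : Submodule A (C.P ((σ ^ i) y)), C.IsInterval σ y j (C.kupischMap σ y i) p ∧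
      ∀ n : ℕ, pd A M ≤ (n + 1 : ℕ) ↔ pd A p ≤ n := by
  obtain ⟨g, hg⟩ := h.covers
  have := natLength_eq_ker_add_of_surjective hg
  have hM := h.natLength_eq
  refine ⟨LinearMap.ker g, (isInterval_P i).submodule hσ (lt_of_le_of_ne h.le_kupischMap hj) ?_,
    fun n => pd_le_succ_iff_pd_ker_le hg⟩
  rw [kupischMap_apply]
  omega

theorem IsInterval.pd_le_iff (hσ : C.IsShift σ) (h : C.IsInterval σ y i j M) (n : ℕ) :
    pd A M ≤ n ↔
      syzygyBound (C.kupischMap σ y) n i j = syzygyBound (C.kupischMap σ y) (n + 1) i j ∨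
      syzygyBound (C.kupischMap σ y) (n + 1) i j = syzygyBound (C.kupischMap σ y) (n + 2) i j := by
  induction n generalizing i j M with
  | zero =>
    rw [Nat.cast_zero, pd_le_zero_iff, h.projective_iff]
    exact (or_iff_right h.lt.ne).symm
  | succ n ih =>
    by_cases hj : j = C.kupischMap σ y i
    · refine iff_of_true ((pd_le_zero_iff.2 (h.projective_iff.2 hj)).trans zero_le) ?_
      subst hj
      exact syzygyBound_self _ n _
    · obtain ⟨p, hp, pd_le_succ_iff⟩ := h.exists_syzygy hσ hj
      exact (pd_le_succ_iff n).trans (ih hp)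

theorem IsInterval.pd_le_two_mul_iff (hσ : C.IsShift σ) (h : C.IsInterval σ y i j M) (k : ℕ) :
    pd A M ≤ (2 * k : ℕ) ↔
      (C.kupischMap σ y)^[k] i = (C.kupischMap σ y)^[k] j ∨
      (C.kupischMap σ y)^[k] j = (C.kupischMap σ y)^[k + 1] i := by
  rw [h.pd_le_iff hσ, syzygyBound_two_mul, syzygyBound_two_mul_add_one,
    show 2 * k + 2 = 2 * (k + 1) from rfl, syzygyBound_two_mul]

theorem IsInterval.pd_le_two_mul_add_one_iff (hσ : C.IsShift σ) (h : C.IsInterval σ y i j M)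
    (k : ℕ) :
    pd A M ≤ (2 * k + 1 : ℕ) ↔
      (C.kupischMap σ y)^[k] j = (C.kupischMap σ y)^[k + 1] i ∨
      (C.kupischMap σ y)^[k + 1] i = (C.kupischMap σ y)^[k + 1] j := by
  rw [h.pd_le_iff hσ, syzygyBound_two_mul_add_one, show 2 * k + 1 + 1 = 2 * (k + 1) from rfl,
    syzygyBound_two_mul, show 2 * k + 1 + 2 = 2 * (k + 1) + 1 from rfl,
    syzygyBound_two_mul_add_one]

theorem IsInterval.exists_leftInverse (hσ : C.IsShift σ) (hNak : IsNakayama A)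
    (hQ : IsInjectiveCogenerator A Q) (h : C.IsInterval σ y i j M)
    (hi : C.kupischMap σ y (i - 1) < j) :
    ∃ (f : M →ₗ[A] Q) (r : Q →ₗ[A] M), Function.LeftInverse r f := by
  have := h.finite
  have := h.nontrivial
  have hM := h.natLength_eq
  refine h.covers.isUniserialModule.exists_leftInverse_of_natLength_maximal hNak hQ ?_
  rintro V _ _ _ hV ⟨g, hg⟩
  by_contra! hlt
  have : Nontrivial V := hg.nontrivial
  have hrange := natLength_range_of_injective hg
  have : Nontrivial (LinearMap.range g) := (LinearEquiv.ofInjective g hg).symm.toEquiv.nontrivial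
  obtain ⟨z, hz⟩ := exists_covers (C := C) hV
  obtain ⟨s, hs⟩ := Nat.exists_eq_add_of_le (hrange ▸ hlt.le)
  have range_covers : C.Covers ((σ ^ i) y) (LinearMap.range g) :=
    h.covers.of_surjective g.surjective_rangeRestrict
  have hzi : (σ ^ s) z = (σ ^ i) y := (hz.submodule hσ hs).unique range_covers
  have V_isInterval : C.IsInterval σ y (i - s) j V := by
    refine ⟨?_, by omega, (sub_le_self i (Nat.cast_nonneg s)).trans_lt h.lt⟩
    rwa [sub_eq_neg_add, zpow_add, Equiv.Perm.mul_apply, ← hzi, zpow_neg, zpow_natCast,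
      Equiv.Perm.inv_eq_iff_eq.2 rfl]
  have hsub : i - s ≤ i - 1 := by omega
  exact (V_isInterval.le_kupischMap.trans (monotone_kupischMap hσ hsub)).not_gt hi

end SimpleCovers

theorem IsUniserialModule.finite_submodule {A M : Type*} [Ring A] [AddCommGroup M] [Module A M]
    [IsNoetherian A M] [IsArtinian A M] (hM : IsUniserialModule A M) :
    Finite (Submodule A M) := by
  refine Finite.of_injective (β := Fin (natLength A M + 1))
    (fun p => ⟨natLength A p, Nat.lt_succ_of_le (natLength_submodule_le p)⟩) fun p q h => ?_
  exact hM.eq_of_natLength_eq (congrArg Fin.val h)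

namespace SimpleCovers

variable {A : Type} [Ring A] [IsArtinianRing A]

theorem exists_finProDim_eq (C : SimpleCovers A) (hNak : IsNakayama A) :
    ∃ m : ℕ, finProDim A = m := by
  have := C.finite_index
  have (i : C.ι) : Finite (Submodule A (C.P i)) := (C.isUniserialModule i).finite_submodule
  obtain ⟨m, hm⟩ := Finite.exists_le fun x : Σ i, Submodule A (C.P i) =>
    (pd A (C.P x.1 ⧸ x.2)).toNat
  suffices finProDim A ≤ m from (ENat.ne_top_iff_exists.1
    (ne_top_of_le_ne_top (ENat.natCast_ne_top m) this)).imp fun _ => Eq.symm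
  refine finProDim_le_iff.2 fun M _ _ _ hM hpd => ?_
  have : Nontrivial M := hM.1
  obtain ⟨i, g, hg⟩ := exists_covers (C := C) (hNak (.of A M) ‹_› hM)
  rw [← pd_congr (g.quotKerEquivOfSurjective hg)] at hpd ⊢
  rw [← ENat.natCast_toNat hpd]
  exact_mod_cast hm ⟨i, LinearMap.ker g⟩

variable {C : SimpleCovers A} {σ : Equiv.Perm C.ι} {Q : Type} [AddCommGroup Q] [Module A Q]

theorem exists_iterate_eq_iterate_succ_pred (hNak : IsNakayama A)
    (hQ : IsInjectiveCogenerator A Q) (hQpd : pd A Q ≠ ⊤) (hσ : C.IsShift σ) {k : ℕ}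
    (hk : finProDim A = (2 * k + 1 : ℕ)) :
    ∃ (y : C.ι) (a : ℤ),
      (C.kupischMap σ y)^[k + 1] a = (C.kupischMap σ y)^[k + 2] (a - 1) := by
  have pd_le_of_ne_top {V : Type} [AddCommGroup V] [Module A V] [Module.Finite A V]
      (hV : pd A V ≠ ⊤) : pd A V ≤ (2 * k + 1 : ℕ) := hk ▸ pd_le_finProDim hV
  obtain ⟨M, _, _, _, hM, hpd, hpd_gt⟩ : ∃ (M : Type) (_ : AddCommGroup M) (_ : Module A M),
      Module.Finite A M ∧ Indec A (.of A M) ∧ pd A M ≠ ⊤ ∧ ¬ pd A M ≤ (2 * k : ℕ) := by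
    by_contra! h
    have := finProDim_le_iff.2 h
    rw [hk, Nat.cast_le] at this
    omega
  have : Nontrivial M := hM.1
  obtain ⟨y, hy⟩ := exists_covers (C := C) (hNak (.of A M) ‹_› hM)
  have M_isInterval : C.IsInterval σ y 0 (natLength A M) M :=
    ⟨hy, by rw [sub_zero], by exact_mod_cast natLength_pos A M⟩
  have hne := not_or.1 (mt (M_isInterval.pd_le_two_mul_iff hσ k).2 hpd_gt)
  obtain ⟨a, ha, hja, haj⟩ := exists_kupischMap_pred_lt M_isInterval.le_kupischMap
  obtain ⟨p, U_isInterval⟩ := exists_isInterval_quotient (ha.trans_lt M_isInterval.lt) hja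
  obtain ⟨f, r, hr⟩ := U_isInterval.exists_leftInverse hσ hNak hQ haj
  have pd_U_ne_top := ne_top_of_le_ne_top hQpd (pd_le_pd_of_leftInverse hr)
  refine ⟨y, a, iterate_eq_iterate_succ_pred (monotone_kupischMap hσ) lt_kupischMap ha haj
    (((M_isInterval.pd_le_two_mul_add_one_iff hσ k).1 (pd_le_of_ne_top hpd)).resolve_left hne.2)
    hne.1 hne.2 ((U_isInterval.pd_le_two_mul_add_one_iff hσ k).1 (pd_le_of_ne_top pd_U_ne_top))
    fun ha0 h => ?_⟩
  obtain ⟨q, X_isInterval⟩ := exists_isInterval_quotient ha0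
    (M_isInterval.lt.le.trans hja)
  have pd_X_le := (X_isInterval.pd_le_two_mul_iff hσ (k + 1)).2 (.inr h)
  exact (X_isInterval.pd_le_two_mul_add_one_iff hσ k).1
    (pd_le_of_ne_top (ne_top_of_le_ne_top (ENat.natCast_ne_top _) pd_X_le))

theorem exists_forall_pd_le_of_iterate_eq (hConn : IsConnectedAlgebra A) (hσ : C.IsShift σ)
    {y : C.ι} {k : ℕ} {a : ℤ}
    (ha : (C.kupischMap σ y)^[k] a = (C.kupischMap σ y)^[k + 1] (a - 1)) :
    ∃ n : ℕ, ∀ (M : Type) [AddCommGroup M] [Module A M], pd A M ≤ n := by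
  have := C.finite_index
  have : NeZero (orderOf σ) := .of_pos (orderOf_pos σ)
  obtain ⟨m, hm⟩ := exists_forall_iterate_eq_or_eq (C.kupischMap σ y) (monotone_kupischMap hσ)
    lt_kupischMap (x := a - 1) (by rwa [sub_add_cancel])
  refine ⟨2 * m, pd_le_of_forall_isSimpleModule fun T _ _ hT => ?_⟩
  obtain ⟨i, ⟨e⟩⟩ := C.exists_equiv T hT
  obtain ⟨t, rfl⟩ := hσ.sameCycle hConn y i
  rw [pd_congr e]
  exact ((isInterval_S t).pd_le_two_mul_iff hσ m).2 (hm t)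

end SimpleCovers

variable {A : Type} [Ring A]

theorem surjective_restrict_or_surjective_restrict {X S : Type*} [AddCommGroup X] [Module A X]
    [AddCommGroup S] [Module A S] [IsSimpleModule A S] {p q : Submodule A X}
    (hpq : Codisjoint p q) {g : X →ₗ[A] S} (hg : Function.Surjective g) :
    Function.Surjective (g ∘ₗ p.subtype) ∨ Function.Surjective (g ∘ₗ q.subtype) := by
  have : Nontrivial S := IsSimpleModule.nontrivial A S
  by_contra! h
  have le_ker {r : Submodule A X} (hr : ¬ Function.Surjective (g ∘ₗ r.subtype)) :
      r ≤ LinearMap.ker g := by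
    rw [← r.range_subtype, LinearMap.range_le_ker_iff]
    exact (LinearMap.surjective_or_eq_zero _).resolve_left hr
  have hker := top_le_iff.1 (hpq.eq_top ▸ sup_le (le_ker h.1) (le_ker h.2))
  obtain ⟨y, hy⟩ := exists_ne (0 : S)
  obtain ⟨x, rfl⟩ := hg y
  exact hy (LinearMap.congr_fun (LinearMap.ker_eq_top.1 hker) x)

theorem IsMinimalInjectiveCogenerator.isInjectiveCogenerator {Q : ModuleCat.{0} A}
    (hQ : IsMinimalInjectiveCogenerator A Q) : IsInjectiveCogenerator A Q := by
  classical
  obtain ⟨ι, _, S, -, exists_unique, f, hinj, hf, -⟩ := hQ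
  refine ⟨Module.injective_module_of_injective_object A Q, fun T _ _ hT => ?_⟩
  obtain ⟨i, ⟨e⟩⟩ := (exists_unique (.of A T) hT).exists
  exact ⟨f.hom ∘ₗ LinearMap.single A (fun i => S i) i ∘ₗ e.toLinearMap,
    ((ModuleCat.mono_iff_injective f).1 hf).comp ((Pi.single_injective i).comp e.injective)⟩

variable [IsArtinianRing A]

theorem IsNakayama.exists_projective_isUniserialModule (hNak : IsNakayama A) (S : Type)
    [AddCommGroup S] [Module A S] [IsSimpleModule A S] :
    ∃ (P : ModuleCat.{0} A) (g : P →ₗ[A] S), Module.Finite A P ∧ Module.Projective A P ∧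
      IsUniserialModule A P ∧ Function.Surjective g := by
  have : Nontrivial S := IsSimpleModule.nontrivial A S
  obtain ⟨y, hy⟩ := exists_ne (0 : S)
  let motive (X : Type) [AddCommGroup X] [Module A X] : Prop := Module.Projective A X →
    (∃ g : X →ₗ[A] S, Function.Surjective g) →
    ∃ (P : ModuleCat.{0} A) (g : P →ₗ[A] S), Module.Finite A P ∧ Module.Projective A P ∧
      IsUniserialModule A P ∧ Function.Surjective g
  suffices motive A from
    this inferInstance ⟨_, IsSimpleModule.toSpanSingleton_surjective A hy⟩
  refine induction_on_indecomposables (motive := motive) ?_ ?_ ?_ A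
  · rintro X _ _ _ _ ⟨g, hg⟩
    exact absurd hg.nontrivial (not_nontrivial X)
  · rintro X _ _ hX hindec hproj ⟨g, hg⟩
    exact ⟨.of A X, g, hX, hproj, hNak (.of A X) hX hindec, hg⟩
  · rintro X _ _ p q hpq hp hq hproj ⟨g, hg⟩
    have projective_of_isCompl {p q : Submodule A X} (hpq : IsCompl p q) :
        Module.Projective A p :=
      .of_split p.subtype (p.projectionOnto q hpq)
        (LinearMap.ext (Submodule.projectionOnto_apply_left hpq))
    exact (surjective_restrict_or_surjective_restrict hpq.codisjoint hg).elim
      (fun h => hp (projective_of_isCompl hpq) ⟨_, h⟩)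
      (fun h => hq (projective_of_isCompl hpq.symm) ⟨_, h⟩)

theorem IsMinimalInjectiveCogenerator.nonempty_simpleCovers {Q : ModuleCat.{0} A}
    (hQ : IsMinimalInjectiveCogenerator A Q) (hNak : IsNakayama A) :
    Nonempty (SimpleCovers A) := by
  obtain ⟨ι, _, S, isSimpleModule, exists_unique, -⟩ := hQ
  choose P π finite projective isUniserialModule surjective_π using fun i =>
    hNak.exists_projective_isUniserialModule (S i)
  exact ⟨{
    ι, S, P, π, isSimpleModule, finite, projective, isUniserialModule, surjective_π
    finite_index := inferInstance
    exists_equiv := fun T _ _ hT => (exists_unique (.of A T) hT).exists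
    eq_of_equiv := fun i j e =>
      (exists_unique (S i) (isSimpleModule i)).unique ⟨.refl A _⟩ e }⟩

end ArtinAlg

open ArtinAlg in
theorem statement_14_general (A : Type) [Ring A] [IsArtinianRing A] (hNak : IsNakayama A)
    (hConn : IsConnectedAlgebra A) (Q : ModuleCat.{0} A) (hQ : IsMinimalInjectiveCogenerator A Q)
    (hQpd : projDim A Q ≠ ⊤) (hInf : ¬ ∃ n : ℕ, ∀ M : ModuleCat.{0} A, projDim A M ≤ n) :
    ∃ n : ℕ, finProDim A = n ∧ Even n := by
  obtain ⟨C⟩ := hQ.nonempty_simpleCovers hNak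
  obtain ⟨σ, hσ⟩ := C.exists_isShift hNak hQ.isInjectiveCogenerator
  obtain ⟨n, hn⟩ := C.exists_finProDim_eq hNak
  refine ⟨n, hn, Nat.not_odd_iff_even.1 fun ⟨k, hk⟩ => hInf ?_⟩
  obtain ⟨y, a, ha⟩ := SimpleCovers.exists_iterate_eq_iterate_succ_pred hNak
    hQ.isInjectiveCogenerator hQpd hσ (hn.trans (congrArg Nat.cast hk))
  obtain ⟨m, hm⟩ := SimpleCovers.exists_forall_pd_le_of_iterate_eq hConn hσ ha
  exact ⟨m, fun M => hm M⟩

open ArtinAlg in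
/-- Let `A` be a connected Nakayama algebra which is Gorenstein (the
left regular module has finite injective dimension and the minimal injective cogenerator
has finite projective dimension) and has infinite global dimension. Then `fin-pro A`
is even. -/
theorem statement_14 (R : Type) [CommRing R] [IsArtinianRing R]
    (A : Type) [Ring A] [Algebra R A] [Module.Finite R A]
    (hNak : IsNakayama A) (hConn : IsConnectedAlgebra A)
    (Q : ModuleCat.{0} A) (hQ : IsMinimalInjectiveCogenerator A Q)
    (hQpd : projDim A Q ≠ ⊤) (hA : injDim A (ModuleCat.of A A) ≠ ⊤)
    (hInf : ¬ ∃ n : ℕ, ∀ M : ModuleCat.{0} A, projDim A M ≤ n) :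
    ∃ n : ℕ, finProDim A = n ∧ Even n := by
  have : IsArtinianRing A := .of_finite R A
  exact statement_14_general A hNak hConn Q hQ hQpd hInf
end
end

section
/- Let A be a cyclic Nakayama algebra. Then 2·a(A) − 1 ≤ fin-pro A ≤ 2·a(A). -/
open CategoryTheory CategoryTheory.Limits

noncomputable section

/-!
For a simple module `S` let `p i = i + length P(τ^i S)`. A uniserial module of length `j - i` with
top `τ^i S` is encoded by the interval `[i, j)` with `j ≤ p i`; it is projective exactly if
`j = p i`, and otherwise its syzygy is `[j, p i)`. Hence its projective dimension is finite exactly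
if some iterate of the monotone map `p` identifies `i` with `j`, or `j` with `p i`, and the number
of iterations needed determines it.

On the other side, `[i + 1, k + 1)` is injective with socle `τ^k S` exactly if
`p i ≤ k < p (i + 1)`, so these `τ^k S` are the simple modules with `ψ (τ^k S) = τ^i S`. Thus
`a (τ^i S)` is the least `m` such that `p^m` identifies `i` and `i + 1`. As `p` is monotone, an
interval collapses under `p^m` exactly if all its unit steps do, so `a(A)` iterations collapse every
interval that collapses at all; this bounds the projective dimension by `2 a(A)`. A simple module
with finite `a` has projective dimension `2 a - 1` or `2 a`, which gives the lower bound.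
-/

namespace NakayamaAlg

open ArtinAlg

section Module

variable {A : Type*} [Ring A] {M N L S T : Type*} [AddCommGroup M] [Module A M]
  [AddCommGroup N] [Module A N] [AddCommGroup L] [Module A L] [AddCommGroup S] [Module A S]
  [AddCommGroup T] [Module A T]

theorem exists_factor {f : M →ₗ[A] N} (hf : Function.Surjective f) {g : M →ₗ[A] L}
    (h : LinearMap.ker f ≤ LinearMap.ker g) : ∃ k : N →ₗ[A] L, k ∘ₗ f = g := by
  refine ⟨(LinearMap.ker f).liftQ g h ∘ₗ (f.quotKerEquivOfSurjective hf).symm, ?_⟩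
  ext x
  have hx : (f.quotKerEquivOfSurjective hf).symm (f x) = Submodule.Quotient.mk x := by
    rw [LinearEquiv.symm_apply_eq]; rfl
  simp [hx]

theorem exists_surjective_factor {f : M →ₗ[A] N} (hf : Function.Surjective f) {g : M →ₗ[A] L}
    (hg : Function.Surjective g) (h : LinearMap.ker f ≤ LinearMap.ker g) :
    ∃ k : N →ₗ[A] L, k ∘ₗ f = g ∧ Function.Surjective k := by
  obtain ⟨k, hk⟩ := exists_factor hf h
  exact ⟨k, hk, Function.Surjective.of_comp (g := f) (by rw [← LinearMap.coe_comp, hk]; exact hg)⟩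

theorem nonempty_equiv_of_ker_eq {f : M →ₗ[A] N} (hf : Function.Surjective f) {g : M →ₗ[A] L}
    (hg : Function.Surjective g) (h : LinearMap.ker f = LinearMap.ker g) :
    Nonempty (N ≃ₗ[A] L) :=
  ⟨(f.quotKerEquivOfSurjective hf).symm ≪≫ₗ Submodule.quotEquivOfEq _ _ h ≪≫ₗ
    g.quotKerEquivOfSurjective hg⟩

theorem length_eq_length_ker_add {f : M →ₗ[A] N} (hf : Function.Surjective f) :
    Module.length A M = Module.length A (LinearMap.ker f) + Module.length A N :=
  Module.length_eq_add_of_exact (LinearMap.ker f).subtype f (Submodule.subtype_injective _)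
    hf (LinearMap.exact_subtype_ker_map f)

theorem length_ker_eq_sub {f : M →ₗ[A] N} (hf : Function.Surjective f) {a b : ℕ}
    (ha : Module.length A M = a) (hb : Module.length A N = b) :
    Module.length A (LinearMap.ker f) = (a - b : ℕ) := by
  have h := length_eq_length_ker_add hf
  rw [ha, hb] at h
  rw [ENat.natCast_sub, h,
    (ENat.addLECancellable_of_ne_top (ENat.natCast_ne_top b)).add_tsub_cancel_right]

theorem injective_of_surjective_of_length_eq {f : M →ₗ[A] N} (hf : Function.Surjective f) {l : ℕ}
    (hM : Module.length A M = l) (hN : Module.length A N = l) : Function.Injective f := by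
  have h := length_ker_eq_sub hf hM hN
  rwa [Nat.sub_self, Nat.cast_zero, Module.length_eq_zero_iff, Submodule.subsingleton_iff_eq_bot,
    LinearMap.ker_eq_bot] at h

theorem length_submodule_lt_of_lt {K K' : Submodule A M} (h : K < K')
    (hK : Module.length A K ≠ ⊤) : Module.length A K < Module.length A K' := by
  rw [Module.length_submodule] at hK ⊢
  rw [Module.length_submodule]
  exact Order.height_strictMono h hK.lt_top

/-- A uniserial module over an arbitrary ring: `ArtinAlg.IsUniserial` for unbundled modules. -/
def IsUniserialModule (A M : Type*) [Ring A] [AddCommGroup M] [Module A M] : Prop :=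
  ∀ N₁ N₂ : Submodule A M, N₁ ≤ N₂ ∨ N₂ ≤ N₁

namespace IsUniserialModule

theorem of_surjective (h : IsUniserialModule A M) {f : M →ₗ[A] N} (hf : Function.Surjective f) :
    IsUniserialModule A N := fun K L => by
  simpa only [Submodule.comap_le_comap_iff_of_surjective hf] using h (K.comap f) (L.comap f)

theorem of_injective (h : IsUniserialModule A M) {f : N →ₗ[A] M} (hf : Function.Injective f) :
    IsUniserialModule A N := fun K L => by
  simpa only [Submodule.map_le_map_iff_of_injective hf] using h (K.map f) (L.map f)

theorem le_ker (h : IsUniserialModule A M) [IsSimpleModule A S] {f : M →ₗ[A] S}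
    (hf : Function.Surjective f) {K : Submodule A M} (hK : K ≠ ⊤) : K ≤ LinearMap.ker f :=
  (h K (LinearMap.ker f)).elim id fun hle =>
    (((LinearMap.isCoatom_ker_of_surjective hf).le_iff.1 hle).resolve_left hK).le

theorem surjective_of_comp_ne_zero (h : IsUniserialModule A M) [IsSimpleModule A S]
    {f : M →ₗ[A] S} (hf : Function.Surjective f) {g : L →ₗ[A] M} (hg : f ∘ₗ g ≠ 0) :
    Function.Surjective g := by
  rw [← LinearMap.range_eq_top]
  contrapose! hg
  exact LinearMap.range_le_ker_iff.1 (h.le_ker hf hg)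

theorem ker_eq_ker (h : IsUniserialModule A M) [IsSimpleModule A S] [IsSimpleModule A T]
    {f : M →ₗ[A] S} (hf : Function.Surjective f) {g : M →ₗ[A] T} (hg : Function.Surjective g) :
    LinearMap.ker f = LinearMap.ker g :=
  le_antisymm (h.le_ker hg (LinearMap.isCoatom_ker_of_surjective hf).1)
    (h.le_ker hf (LinearMap.isCoatom_ker_of_surjective hg).1)

theorem le_of_length_le (h : IsUniserialModule A M) {K K' : Submodule A M}
    (hK' : Module.length A K' ≠ ⊤) (hl : Module.length A K ≤ Module.length A K') : K ≤ K' := by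
  by_contra hle
  exact (length_submodule_lt_of_lt (((h K K').resolve_left hle).lt_of_not_ge hle) hK').not_ge hl

theorem eq_of_length_eq (h : IsUniserialModule A M) {K K' : Submodule A M}
    (hK : Module.length A K ≠ ⊤) (hl : Module.length A K = Module.length A K') : K = K' :=
  le_antisymm (h.le_of_length_le (hl ▸ hK) hl.le) (h.le_of_length_le hK hl.ge)

theorem nonempty_equiv_of_injective (h : IsUniserialModule A M) {f : N →ₗ[A] M}
    (hf : Function.Injective f) {g : L →ₗ[A] M} (hg : Function.Injective g)
    (hN : Module.length A N ≠ ⊤) (hl : Module.length A N = Module.length A L) :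
    Nonempty (N ≃ₗ[A] L) := by
  have e := LinearEquiv.ofInjective f hf
  have e' := LinearEquiv.ofInjective g hg
  have hrange : LinearMap.range f = LinearMap.range g :=
    h.eq_of_length_eq (e.length_eq ▸ hN) (by rw [← e.length_eq, ← e'.length_eq, hl])
  exact ⟨e ≪≫ₗ LinearEquiv.ofEq _ _ hrange ≪≫ₗ e'.symm⟩

end IsUniserialModule

/-- A uniform module: any two nonzero submodules meet. The zero module is included. -/
def IsUniformModule (A M : Type*) [Ring A] [AddCommGroup M] [Module A M] : Prop :=
  ∀ K L : Submodule A M, Disjoint K L → K = ⊥ ∨ L = ⊥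

/-- The range of `f` is an essential submodule: it meets every nonzero submodule. -/
def HasEssentialRange (f : N →ₗ[A] M) : Prop :=
  ∀ K : Submodule A M, Disjoint K (LinearMap.range f) → K = ⊥

theorem exists_essential_quotient {f : N →ₗ[A] M} (hf : Function.Injective f) :
    ∃ C : Submodule A M, Function.Injective (C.mkQ ∘ₗ f) ∧ HasEssentialRange (C.mkQ ∘ₗ f) := by
  obtain ⟨C, hC⟩ := zorn_le₀ {C : Submodule A M | Disjoint C (LinearMap.range f)} fun c hc hchain =>
    ⟨sSup c, (hchain.directedOn.disjoint_sSup_left).2 fun _ h => hc h, fun _ => le_sSup⟩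
  have hdisj : Disjoint C (LinearMap.range f) := hC.prop
  refine ⟨C, (injective_iff_map_eq_zero _).2 fun x hx => ?_, fun K hK => ?_⟩
  · have hxC : f x ∈ C := (Submodule.Quotient.mk_eq_zero C).1 hx
    exact (map_eq_zero_iff f hf).1 (Submodule.disjoint_def.1 hdisj _ hxC ⟨x, rfl⟩)
  · have hle : K.comap C.mkQ ≤ C := by
      refine hC.le_of_ge (Submodule.disjoint_def.2 ?_) (Submodule.le_comap_mkQ C K)
      rintro _ hx ⟨y, rfl⟩
      have hy : C.mkQ (f y) = 0 := Submodule.disjoint_def.1 hK _ hx ⟨y, rfl⟩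
      exact Submodule.disjoint_def.1 hdisj _ ((Submodule.Quotient.mk_eq_zero C).1 hy) ⟨y, rfl⟩
    rw [← Submodule.map_comap_eq_of_surjective C.mkQ_surjective K, ← LinearMap.le_ker_iff_map,
      Submodule.ker_mkQ]
    exact hle

namespace IsUniformModule

theorem of_injective (h : IsUniformModule A M) {f : N →ₗ[A] M} (hf : Function.Injective f) :
    IsUniformModule A N := fun K L hKL => by
  simpa only [(Submodule.map_injective_of_injective hf).eq_iff' (Submodule.map_bot f)] using
    h _ _ (Submodule.disjoint_map hf hKL)

theorem of_hasEssentialRange (h : IsUniformModule A N) {f : N →ₗ[A] M}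
    (hf : Function.Injective f) (hess : HasEssentialRange f) : IsUniformModule A M := by
  intro K L hKL
  have comap_eq_bot {K : Submodule A M} (hK : K.comap f = ⊥) : K = ⊥ := by
    refine hess K (Submodule.disjoint_def.2 ?_)
    rintro _ hx ⟨y, rfl⟩
    rw [(Submodule.mem_bot A).1 (hK ▸ hx : y ∈ (⊥ : Submodule A N)), map_zero]
  refine (h (K.comap f) (L.comap f) ?_).imp comap_eq_bot comap_eq_bot
  rw [disjoint_iff, ← Submodule.comap_inf, hKL.eq_bot, Submodule.comap_bot,
    LinearMap.ker_eq_bot.2 hf]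

theorem injective_of_comp (h : IsUniformModule A M) [Nontrivial N] {f : N →ₗ[A] M}
    (hf : Function.Injective f) {g : M →ₗ[A] L} (hg : Function.Injective (g ∘ₗ f)) :
    Function.Injective g := by
  have hdisj : Disjoint (LinearMap.ker g) (LinearMap.range f) := by
    refine Submodule.disjoint_def.2 ?_
    rintro _ hx ⟨y, rfl⟩
    rw [hg (a₁ := y) (a₂ := 0) (by simpa using hx), map_zero]
  refine LinearMap.ker_eq_bot.1 ((h _ _ hdisj).resolve_right fun hbot => ?_)
  obtain ⟨y, hy⟩ := exists_ne (0 : N)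
  exact hy (hf (by rw [LinearMap.range_eq_bot.1 hbot, LinearMap.zero_apply, LinearMap.zero_apply]))

end IsUniformModule

theorem IsUniserialModule.isUniformModule (h : IsUniserialModule A M) : IsUniformModule A M :=
  fun K L hKL => (h K L).imp hKL.eq_bot_of_le hKL.symm.eq_bot_of_le

end Module

section Lifting

variable {A : Type*} [Ring A] {E U W X Y : Type*} [AddCommGroup E] [Module A E]
  [AddCommGroup U] [Module A U] [AddCommGroup W] [Module A W] [AddCommGroup X] [Module A X]
  [AddCommGroup Y] [Module A Y]

theorem exists_fg_of_mem_smul_top (I : Ideal A) {y : Y} (hy : y ∈ I • (⊤ : Submodule A Y)) :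
    ∃ Y₀ : Submodule A Y, Y₀.FG ∧ y ∈ I • Y₀ := by
  refine Submodule.smul_induction_on hy (fun r hr y _ => ?_) ?_
  · exact ⟨_, Submodule.fg_span_singleton y,
      Submodule.smul_mem_smul hr (Submodule.mem_span_singleton_self y)⟩
  · rintro x y ⟨X₀, hX₀, hx⟩ ⟨Y₀, hY₀, hy⟩
    exact ⟨X₀ ⊔ Y₀, hX₀.sup hY₀, Submodule.smul_sup I X₀ Y₀ ▸ Submodule.add_mem_sup hx hy⟩

theorem isSemisimpleModule_quotient_jacobson_smul_top [IsSemiprimaryRing A] :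
    IsSemisimpleModule A (Y ⧸ (Ring.jacobson A • (⊤ : Submodule A Y))) := by
  have h : Module.IsTorsionBySet A (Y ⧸ (Ring.jacobson A • (⊤ : Submodule A Y)))
      (Ring.jacobson A) := by
    rw [Module.isTorsionBySet_quotient_iff]
    exact fun m i hi => Submodule.smul_mem_smul hi trivial
  let _ := h.module
  exact (h.semilinearMap.isSemisimpleModule_iff_of_bijective Function.bijective_id).2 inferInstance

/-
If `i w` lies in the radical of `Y`, then it lies in the radical of a finitely generated submodule,
and every map from there to a semisimple module kills it.
-/
theorem exists_retraction_of_forall_fg [IsSemiprimaryRing A] [IsSemisimpleModule A W]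
    {i : W →ₗ[A] Y}
    (h : ∀ Y₀ : Submodule A Y, Y₀.FG → ∃ ρ : Y₀ →ₗ[A] W, ∀ w (hw : i w ∈ Y₀), ρ ⟨i w, hw⟩ = w) :
    ∃ ρ : Y →ₗ[A] W, ρ ∘ₗ i = LinearMap.id := by
  let J := Ring.jacobson A
  let π := (J • (⊤ : Submodule A Y)).mkQ
  have hπi : Function.Injective (π ∘ₗ i) := by
    refine (injective_iff_map_eq_zero _).2 fun w hw => ?_
    obtain ⟨Y₀, hY₀, hwY₀⟩ := exists_fg_of_mem_smul_top J
      ((Submodule.Quotient.mk_eq_zero (J • (⊤ : Submodule A Y))).1 hw)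
    obtain ⟨ρ, hρ⟩ := h Y₀ hY₀
    have hle : J • Y₀ ≤ (LinearMap.ker ρ).map Y₀.subtype := by
      refine Submodule.smul_le.2 fun r hr y hy => ⟨r • ⟨y, hy⟩, ?_, rfl⟩
      rw [SetLike.mem_coe, LinearMap.mem_ker, map_smul]
      exact Module.mem_annihilator.1 (IsSemisimpleModule.jacobson_le_annihilator A W hr) _
    obtain ⟨y, hy, hyw⟩ := hle hwY₀
    rw [← hρ w (hyw ▸ y.2), ← LinearMap.mem_ker.1 hy]
    exact congrArg ρ (Subtype.ext hyw.symm)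
  have := isSemisimpleModule_quotient_jacobson_smul_top (A := A) (Y := Y)
  obtain ⟨ρ, hρ⟩ := IsSemisimpleModule.extension_property _ hπi LinearMap.id
  exact ⟨ρ ∘ₗ π, hρ⟩

theorem exists_lift_of_forall_fg [IsSemiprimaryRing A] {g : E →ₗ[A] U}
    (hg : Function.Surjective g) [IsSemisimpleModule A (LinearMap.ker g)] {h : X →ₗ[A] U}
    (hfg : ∀ X₀ : Submodule A X, X₀.FG → ∃ k : X₀ →ₗ[A] E, g ∘ₗ k = h ∘ₗ X₀.subtype) :
    ∃ k : X →ₗ[A] E, g ∘ₗ k = h := by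
  -- A lift of `h` is a retraction onto `ker g` of the pullback `Y` of `h` and `g`.
  let Y : Submodule A (X × E) :=
    LinearMap.eqLocus (h ∘ₗ LinearMap.fst A X E) (g ∘ₗ LinearMap.snd A X E)
  let i : LinearMap.ker g →ₗ[A] Y :=
    (LinearMap.inr A X E ∘ₗ (LinearMap.ker g).subtype).codRestrict Y fun w =>
      (map_zero h).trans (LinearMap.mem_ker.1 w.2).symm
  let fstY : Y →ₗ[A] X := LinearMap.fst A X E ∘ₗ Y.subtype
  let sndY : Y →ₗ[A] E := LinearMap.snd A X E ∘ₗ Y.subtype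
  have hY (y : Y) : h (fstY y) = g (sndY y) := y.2
  have hfst : Function.Surjective fstY := fun x =>
    let ⟨e, he⟩ := hg (h x)
    ⟨⟨(x, e), he.symm⟩, rfl⟩
  obtain ⟨ρ, hρ⟩ : ∃ ρ : Y →ₗ[A] LinearMap.ker g, ρ ∘ₗ i = LinearMap.id := by
    refine exists_retraction_of_forall_fg fun Y₀ hY₀ => ?_
    obtain ⟨k, hk⟩ := hfg (Y₀.map fstY) (hY₀.map fstY)
    have hk' (x) : g (k x) = h x := LinearMap.congr_fun hk x
    refine ⟨(sndY ∘ₗ Y₀.subtype - k ∘ₗ fstY.submoduleMap Y₀).codRestrict _ fun y => ?_,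
      fun w hw => Subtype.ext ?_⟩
    · simp [hk', hY]
    · have hfstw : fstY.submoduleMap Y₀ ⟨i w, hw⟩ = 0 := rfl
      change sndY (i w) - k (fstY.submoduleMap Y₀ ⟨i w, hw⟩) = sndY (i w)
      rw [hfstw, map_zero, sub_zero]
  obtain ⟨k, hk⟩ := exists_factor (g := sndY - (LinearMap.ker g).subtype ∘ₗ ρ) hfst <| by
    intro y hy
    have hyi : y = i ⟨sndY y, by rw [LinearMap.mem_ker, ← hY, LinearMap.mem_ker.1 hy, map_zero]⟩ :=
      Subtype.ext (Prod.ext hy rfl)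
    have hρy : (ρ y : E) = sndY y := by
      rw [hyi]; exact congrArg Subtype.val (LinearMap.congr_fun hρ _)
    simp [hρy]
  refine ⟨k, (LinearMap.cancel_right hfst).1 (LinearMap.ext fun y => ?_)⟩
  rw [LinearMap.comp_assoc, hk]
  simp [hY]

end Lifting

section Decomposition

variable {A : Type} [Ring A]

theorem indec_of_isUniformModule {M : Type} [AddCommGroup M] [Module A M] [Nontrivial M]
    (h : IsUniformModule A M) : Indec A (ModuleCat.of A M) :=
  ⟨‹_›, fun K L hKL => h K L hKL.disjoint⟩

theorem exists_isCompl_indec {M : Type} [AddCommGroup M] [Module A M] [IsArtinian A M]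
    {K : Submodule A M} (hK : K ≠ ⊤) :
    ∃ N N' : Submodule A M, IsCompl N N' ∧ Indec A (ModuleCat.of A N) ∧ ¬ N ≤ K := by
  obtain ⟨N, ⟨⟨N', hNN'⟩, hNK⟩, hmin⟩ := exists_minimal_of_wellFoundedLT
    (fun N : Submodule A M => (∃ N', IsCompl N N') ∧ ¬ N ≤ K)
    ⟨⊤, ⟨⊥, isCompl_top_bot⟩, fun h => hK (top_le_iff.1 h)⟩
  have eq_bot_of_not_le {L₁ L₂ : Submodule A N} (hL : IsCompl L₁ L₂)
      (hLK : ¬ L₁.map N.subtype ≤ K) : L₂ = ⊥ := by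
    have hsup : L₁.map N.subtype ⊔ L₂.map N.subtype = N := by
      rw [← Submodule.map_sup, hL.sup_eq_top, Submodule.map_subtype_top]
    have hdisj := Submodule.disjoint_map N.subtype_injective hL.disjoint
    have hcompl := hdisj.isCompl_sup_right_of_isCompl_sup_left (hsup.symm ▸ hNN')
    have hle := hmin ⟨⟨_, hcompl⟩, hLK⟩ (Submodule.map_subtype_le N L₁)
    refine (Submodule.map_injective_of_injective N.subtype_injective).eq_iff.1 ?_
    rw [Submodule.map_bot]
    exact hdisj.symm.eq_bot_of_le ((Submodule.map_subtype_le N L₂).trans hle)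
  refine ⟨N, N', hNN', ⟨Submodule.nontrivial_iff_ne_bot.2 ?_, fun L₁ L₂ hL => ?_⟩, hNK⟩
  · rintro rfl
    exact hNK bot_le
  · by_contra! hne
    have hle₁ := not_not.1 (mt (eq_bot_of_not_le hL) hne.2)
    have hle₂ := not_not.1 (mt (eq_bot_of_not_le hL.symm) hne.1)
    apply hNK
    rw [← Submodule.map_subtype_top N, ← hL.sup_eq_top, Submodule.map_sup]
    exact sup_le hle₁ hle₂

theorem finite_induction_indec [IsArtinianRing A] {motive : ModuleCat.{0} A → Prop}
    (subsingleton : ∀ M : ModuleCat.{0} A, Subsingleton M → motive M)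
    (indec : ∀ M : ModuleCat.{0} A, Module.Finite A M → Indec A M → motive M)
    (isCompl : ∀ (M : ModuleCat.{0} A) (N N' : Submodule A M), IsCompl N N' →
      motive (ModuleCat.of A N) → motive (ModuleCat.of A N') → motive M)
    (M : ModuleCat.{0} A) [Module.Finite A M] : motive M := by
  induction hl : Module.length A M using WellFoundedLT.induction generalizing M with
  | ind l ih =>
    subst hl
    rcases subsingleton_or_nontrivial M with hM | hM
    · exact subsingleton M hM
    · obtain ⟨N, N', hNN', hN, hNbot⟩ := exists_isCompl_indec (bot_ne_top (α := Submodule A M))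
      refine isCompl M N N' hNN' (indec _ (inferInstanceAs (Module.Finite A N)) hN)
        (ih _ (Submodule.length_lt ?_) (ModuleCat.of A N') rfl)
      rintro rfl
      exact hNbot (disjoint_top.1 hNN'.disjoint).le

theorem exists_simple_quotient (M : Type) [AddCommGroup M] [Module A M] [Module.Finite A M]
    [Nontrivial M] : ∃ S : ModuleCat.{0} A, IsSimpleModule A S ∧
      ∃ f : M →ₗ[A] S, Function.Surjective f := by
  obtain ⟨K, hK, -⟩ := (eq_top_or_exists_le_coatom (⊥ : Submodule A M)).resolve_left bot_ne_top
  exact ⟨ModuleCat.of A (M ⧸ K), isSimpleModule_iff_isCoatom.2 hK, K.mkQ, K.mkQ_surjective⟩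

end Decomposition

/-- An Artinian ring all of whose finitely generated indecomposable modules are uniserial. -/
class IsNakayamaRing (A : Type) [Ring A] : Prop extends IsArtinianRing A where
  isNakayama : IsNakayama A

/-- A Nakayama ring without simple projective modules. -/
class IsCyclicNakayamaRing (A : Type) [Ring A] : Prop extends IsNakayamaRing A where
  not_projective : ∀ S : ModuleCat.{0} A, IsSimpleModule A S → ¬ Projective S

/-- A simple module, as an object for which projective cover and translate are functions. -/
abbrev SimpleMod (A : Type) [Ring A] := {S : ModuleCat.{0} A // IsSimpleModule A S}

section Nakayama

variable {A : Type} [Ring A]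

instance : CoeSort (SimpleMod A) Type := ⟨fun S => S.1⟩

instance (S : SimpleMod A) : IsSimpleModule A S := S.2

instance (S : SimpleMod A) : Nontrivial S := IsSimpleModule.nontrivial A S

instance : Setoid (SimpleMod A) where
  r S T := Nonempty (S ≃ₗ[A] T)
  iseqv := ⟨fun _ => ⟨LinearEquiv.refl A _⟩, fun ⟨e⟩ => ⟨e.symm⟩, fun ⟨e⟩ ⟨e'⟩ => ⟨e.trans e'⟩⟩

theorem isUniserialModule_of_indec [IsNakayamaRing A] {M : Type} [AddCommGroup M] [Module A M]
    [hM : Module.Finite A M] (h : Indec A (ModuleCat.of A M)) : IsUniserialModule A M :=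
  IsNakayamaRing.isNakayama (ModuleCat.of A M) hM h

theorem ne_zero_of_surjective {M : Type} [AddCommGroup M] [Module A M] {S : SimpleMod A}
    {f : M →ₗ[A] S} (hf : Function.Surjective f) : f ≠ 0 := by
  rintro rfl
  obtain ⟨y, hy⟩ := exists_ne (0 : S)
  obtain ⟨x, rfl⟩ := hf y
  exact hy rfl

theorem exists_projective_cover [IsNakayamaRing A] (S : SimpleMod A) :
    ∃ P : ModuleCat.{0} A, Module.Finite A P ∧ Module.Projective A P ∧ IsUniserialModule A P ∧
      ∃ f : P →ₗ[A] S, Function.Surjective f := by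
  obtain ⟨y, hy⟩ := exists_ne (0 : S)
  let f : A →ₗ[A] S := LinearMap.toSpanSingleton A S y
  have hf : f ≠ 0 := fun h => hy (by simpa [f] using LinearMap.congr_fun h 1)
  obtain ⟨N, N', hN, hindec, hle⟩ := exists_isCompl_indec (LinearMap.ker_eq_top.not.2 hf)
  refine ⟨ModuleCat.of A N, inferInstanceAs (Module.Finite A N),
    Module.Projective.of_split N.subtype (N.projectionOnto N' hN) ?_,
    isUniserialModule_of_indec hindec, f ∘ₗ N.subtype, LinearMap.surjective_of_ne_zero fun h => ?_⟩
  · ext x; simp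
  · exact hle (by simpa using LinearMap.range_le_ker_iff.2 h)

section ProjCover

variable [IsNakayamaRing A] (S : SimpleMod A)

/-- The projective cover of the simple module `S`. -/
def projCover : ModuleCat.{0} A := (exists_projective_cover S).choose

instance : Module.Finite A (projCover S) := (exists_projective_cover S).choose_spec.1

instance : Module.Projective A (projCover S) := (exists_projective_cover S).choose_spec.2.1

theorem isUniserialModule_projCover : IsUniserialModule A (projCover S) :=
  (exists_projective_cover S).choose_spec.2.2.1

/-- The projection of the projective cover of `S` onto `S`. -/
def projCoverMap : projCover S →ₗ[A] S := (exists_projective_cover S).choose_spec.2.2.2.choose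

theorem projCoverMap_surjective : Function.Surjective (projCoverMap S) :=
  (exists_projective_cover S).choose_spec.2.2.2.choose_spec

/-- The length of the projective cover of `S`. -/
def coverLength : ℕ := (Module.length A (projCover S)).toNat

end ProjCover

section Tau

variable [IsCyclicNakayamaRing A] (S : SimpleMod A)

instance : Nontrivial (LinearMap.ker (projCoverMap S)) := by
  rw [Submodule.nontrivial_iff_ne_bot]
  intro h
  have hproj : Module.Projective A S := Module.Projective.of_equiv
    (LinearEquiv.ofBijective _ ⟨LinearMap.ker_eq_bot.1 h, projCoverMap_surjective S⟩)
  exact IsCyclicNakayamaRing.not_projective S.1 S.2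
    ((IsProjective.iff_projective (R := A) (P := S.1)).1 hproj)

/-- The top of the radical of the projective cover of `S`; `isTauOf_tau` shows that it is the
Auslander–Reiten translate of `S`. -/
def tau : SimpleMod A :=
  ⟨_, (exists_simple_quotient (A := A) (LinearMap.ker (projCoverMap S))).choose_spec.1⟩

theorem exists_surjective_tau :
    ∃ f : LinearMap.ker (projCoverMap S) →ₗ[A] tau S, Function.Surjective f :=
  (exists_simple_quotient (A := A) (LinearMap.ker (projCoverMap S))).choose_spec.2

end Tau

/-- `M` is uniserial with top `S` and length `l`. -/
structure IsUniserialOf (M : Type) [AddCommGroup M] [Module A M] (S : SimpleMod A) (l : ℕ) :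
    Prop where
  isUniserialModule : IsUniserialModule A M
  length_eq : Module.length A M = l
  exists_surjective : ∃ f : M →ₗ[A] S, Function.Surjective f

variable {M N : Type} [AddCommGroup M] [Module A M] [AddCommGroup N] [Module A N]
  {S T : SimpleMod A} {l k : ℕ}

theorem IsUniserialOf.length_ne_top (h : IsUniserialOf M S l) : Module.length A M ≠ ⊤ :=
  h.length_eq ▸ ENat.natCast_ne_top l

theorem IsUniserialOf.congr (h : IsUniserialOf M S l) (e : M ≃ₗ[A] N) : IsUniserialOf N S l :=
  let ⟨f, hf⟩ := h.exists_surjective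
  ⟨h.isUniserialModule.of_surjective (f := e.toLinearMap) e.surjective,
    e.length_eq ▸ h.length_eq, f ∘ₗ e.symm, hf.comp e.symm.surjective⟩

theorem IsUniserialOf.congr_top (h : IsUniserialOf M S l) (hST : S ≈ T) : IsUniserialOf M T l :=
  let ⟨f, hf⟩ := h.exists_surjective
  let ⟨e⟩ := hST
  ⟨h.isUniserialModule, h.length_eq, e.toLinearMap ∘ₗ f, e.surjective.comp hf⟩

theorem IsUniserialOf.top_equiv_top (h : IsUniserialOf M S l) (h' : IsUniserialOf M T k) : S ≈ T :=
  let ⟨_, hf⟩ := h.exists_surjective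
  let ⟨_, hg⟩ := h'.exists_surjective
  nonempty_equiv_of_ker_eq hf hg (h.isUniserialModule.ker_eq_ker hf hg)

theorem IsUniserialOf.nontrivial (h : IsUniserialOf M S l) : Nontrivial M :=
  let ⟨_, hf⟩ := h.exists_surjective
  hf.nontrivial

theorem IsUniserialOf.one_le (h : IsUniserialOf M S l) : 1 ≤ l := by
  have := h.nontrivial
  have hpos := Module.length_pos (R := A) (M := M)
  rw [h.length_eq] at hpos
  exact_mod_cast hpos

theorem isUniserialOf_simple (S : SimpleMod A) : IsUniserialOf S S 1 where
  isUniserialModule K L := by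
    rcases eq_bot_or_eq_top K with rfl | rfl
    exacts [.inl bot_le, .inr le_top]
  length_eq := by rw [Module.length_eq_one]; rfl
  exists_surjective := ⟨LinearMap.id, Function.surjective_id⟩

theorem IsUniserialOf.length_ker (h : IsUniserialOf M S l) {f : M →ₗ[A] S}
    (hf : Function.Surjective f) : Module.length A (LinearMap.ker f) = (l - 1 : ℕ) :=
  length_ker_eq_sub hf h.length_eq (isUniserialOf_simple S).length_eq

theorem IsUniserialOf.exists_of_isUniserialModule [IsArtinianRing A] [Module.Finite A M]
    [Nontrivial M] (h : IsUniserialModule A M) : ∃ (S : SimpleMod A) (l : ℕ), IsUniserialOf M S l :=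
  let ⟨S, hS, hf⟩ := exists_simple_quotient (A := A) M
  ⟨⟨S, hS⟩, _, h, (ENat.natCast_toNat Module.length_ne_top).symm, hf⟩

section Nakayama

variable [IsNakayamaRing A]

theorem isUniserialOf_projCover (S : SimpleMod A) :
    IsUniserialOf (projCover S) S (coverLength S) :=
  ⟨isUniserialModule_projCover S, (ENat.natCast_toNat Module.length_ne_top).symm,
    projCoverMap S, projCoverMap_surjective S⟩

theorem IsUniserialOf.exists_projCover_lift (h : IsUniserialOf M S l) {f : M →ₗ[A] S}
    (hf : Function.Surjective f) :
    ∃ q : projCover S →ₗ[A] M, f ∘ₗ q = projCoverMap S ∧ Function.Surjective q := by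
  obtain ⟨q, hq⟩ := Module.projective_lifting_property f (projCoverMap S) hf
  refine ⟨q, hq, h.isUniserialModule.surjective_of_comp_ne_zero hf ?_⟩
  exact hq ▸ ne_zero_of_surjective (projCoverMap_surjective S)

theorem IsUniserialOf.exists_projCover_surjective (h : IsUniserialOf M S l) :
    ∃ q : projCover S →ₗ[A] M, Function.Surjective q :=
  let ⟨_, hf⟩ := h.exists_surjective
  let ⟨q, _, hq⟩ := h.exists_projCover_lift hf
  ⟨q, hq⟩

theorem IsUniserialOf.finite (h : IsUniserialOf M S l) : Module.Finite A M :=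
  let ⟨q, hq⟩ := h.exists_projCover_surjective
  Module.Finite.of_surjective q hq

theorem IsUniserialOf.le_coverLength (h : IsUniserialOf M S l) : l ≤ coverLength S := by
  obtain ⟨q, hq⟩ := h.exists_projCover_surjective
  have hle := Module.length_le_of_surjective q hq
  rw [h.length_eq, (isUniserialOf_projCover S).length_eq] at hle
  exact_mod_cast hle

theorem coverLength_congr (h : S ≈ T) : coverLength S = coverLength T :=
  le_antisymm ((isUniserialOf_projCover S).congr_top h).le_coverLength
    ((isUniserialOf_projCover T).congr_top (Setoid.symm h)).le_coverLength

theorem IsUniserialOf.exists_surjective_of_le (h : IsUniserialOf M S l)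
    (h' : IsUniserialOf N S k) (hkl : k ≤ l) {f : M →ₗ[A] S} (hf : Function.Surjective f)
    {g : N →ₗ[A] S} (hg : Function.Surjective g) :
    ∃ p : M →ₗ[A] N, g ∘ₗ p = f ∧ Function.Surjective p := by
  obtain ⟨q, hq, hqs⟩ := h.exists_projCover_lift hf
  obtain ⟨r, hr, hrs⟩ := h'.exists_projCover_lift hg
  have hP := isUniserialOf_projCover S
  have hle : LinearMap.ker q ≤ LinearMap.ker r := by
    have hr := length_ker_eq_sub hrs hP.length_eq h'.length_eq
    apply hP.isUniserialModule.le_of_length_le (hr ▸ ENat.natCast_ne_top _)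
    rw [length_ker_eq_sub hqs hP.length_eq h.length_eq, hr]
    exact_mod_cast Nat.sub_le_sub_left hkl _
  obtain ⟨p, hp, hps⟩ := exists_surjective_factor hqs hrs hle
  exact ⟨p, by rw [← LinearMap.cancel_right hqs, LinearMap.comp_assoc, hp, hq, hr], hps⟩

theorem IsUniserialOf.nonempty_equiv (h : IsUniserialOf M S l) (h' : IsUniserialOf N S l) :
    Nonempty (M ≃ₗ[A] N) := by
  obtain ⟨f, hf⟩ := h.exists_surjective
  obtain ⟨g, hg⟩ := h'.exists_surjective
  obtain ⟨p, -, hp⟩ := h.exists_surjective_of_le h' le_rfl hf hg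
  exact ⟨LinearEquiv.ofBijective p
    ⟨injective_of_surjective_of_length_eq hp h.length_eq h'.length_eq, hp⟩⟩

theorem IsUniserialOf.projective_iff (h : IsUniserialOf M S l) :
    Module.Projective A M ↔ l = coverLength S := by
  have hP := isUniserialOf_projCover S
  constructor
  · intro hproj
    obtain ⟨q, hq⟩ := h.exists_projCover_surjective
    obtain ⟨s, hs⟩ := Module.projective_lifting_property q LinearMap.id hq
    have hsinj : Function.Injective s := fun x y hxy => by
      simpa [← LinearMap.comp_apply, hs] using congrArg q hxy
    have hle := Module.length_le_of_injective s hsinj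
    rw [h.length_eq, hP.length_eq] at hle
    have := h.nontrivial
    have hqinj := hP.isUniserialModule.isUniformModule.injective_of_comp hsinj (g := q)
      (by rw [hs]; exact Function.injective_id)
    have hlen := (LinearEquiv.ofBijective q ⟨hqinj, hq⟩).length_eq
    rw [h.length_eq, hP.length_eq] at hlen
    exact_mod_cast hlen.symm
  · rintro rfl
    obtain ⟨e⟩ := hP.nonempty_equiv h
    exact Module.Projective.of_equiv e

end Nakayama

section Cyclic

variable [IsCyclicNakayamaRing A]

theorem two_le_coverLength (S : SimpleMod A) : 2 ≤ coverLength S := by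
  have hpos := Module.length_pos (R := A) (M := LinearMap.ker (projCoverMap S))
  rw [(isUniserialOf_projCover S).length_ker (projCoverMap_surjective S)] at hpos
  have : 0 < coverLength S - 1 := by exact_mod_cast hpos
  omega

theorem IsUniserialOf.ker_top (h : IsUniserialOf M S l) (hl : 2 ≤ l) {f : M →ₗ[A] S}
    (hf : Function.Surjective f) : IsUniserialOf (LinearMap.ker f) (tau S) (l - 1) := by
  obtain ⟨q, hq, hqs⟩ := h.exists_projCover_lift hf
  have hqf (x) : f (q x) = projCoverMap S x := LinearMap.congr_fun hq x
  let r : LinearMap.ker (projCoverMap S) →ₗ[A] LinearMap.ker f :=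
    q.restrict fun x hx => by rwa [LinearMap.mem_ker, hqf]
  have hr : Function.Surjective r := by
    rintro ⟨y, hy⟩
    obtain ⟨x, rfl⟩ := hqs y
    exact ⟨⟨x, by rwa [LinearMap.mem_ker, ← hqf]⟩, rfl⟩
  have := h.finite
  have : Nontrivial (LinearMap.ker f) := by
    rw [← Module.length_pos_iff (R := A), h.length_ker hf]
    exact_mod_cast (by omega : 0 < l - 1)
  obtain ⟨T, k, hT⟩ := exists_of_isUniserialModule
    (h.isUniserialModule.of_injective (LinearMap.ker f).subtype_injective)
  obtain ⟨g, hg⟩ := hT.exists_surjective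
  obtain ⟨t, ht⟩ := exists_surjective_tau S
  have hker := ((isUniserialModule_projCover S).of_injective
    (LinearMap.ker (projCoverMap S)).subtype_injective).ker_eq_ker (f := g ∘ₗ r)
      (hg.comp hr) ht
  have hlen : k = l - 1 := by exact_mod_cast hT.length_eq.symm.trans (h.length_ker hf)
  exact hlen ▸ hT.congr_top (nonempty_equiv_of_ker_eq (f := g ∘ₗ r) (hg.comp hr) ht hker)

theorem isUniserialOf_ker_projCoverMap (S : SimpleMod A) :
    IsUniserialOf (LinearMap.ker (projCoverMap S)) (tau S) (coverLength S - 1) :=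
  (isUniserialOf_projCover S).ker_top (two_le_coverLength S) (projCoverMap_surjective S)

theorem coverLength_le_coverLength_tau_add_one (S : SimpleMod A) :
    coverLength S ≤ coverLength (tau S) + 1 := by
  have := (isUniserialOf_ker_projCoverMap S).le_coverLength
  omega

theorem tau_congr (h : S ≈ T) : tau S ≈ tau T := by
  obtain ⟨f, hf⟩ := ((isUniserialOf_projCover S).congr_top h).exists_surjective
  have hker := (isUniserialModule_projCover S).ker_eq_ker hf (projCoverMap_surjective S)
  have hT := ((isUniserialOf_projCover S).congr_top h).ker_top (two_le_coverLength S) hf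
  exact (isUniserialOf_ker_projCoverMap S).top_equiv_top (hker ▸ hT)

theorem tau_iterate_congr (h : S ≈ T) (k : ℕ) : tau^[k] S ≈ tau^[k] T := by
  induction k with
  | zero => exact h
  | succ k ih => simpa only [Function.iterate_succ_apply'] using tau_congr ih

theorem IsUniserialOf.exists_submodule (h : IsUniserialOf M S l) (hkl : k < l) :
    ∃ K : Submodule A M, IsUniserialOf K (tau^[k] S) (l - k) := by
  induction k with
  | zero => exact ⟨⊤, h.congr Submodule.topEquiv.symm⟩
  | succ k ih =>
    obtain ⟨K, hK⟩ := ih (by omega)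
    obtain ⟨f, hf⟩ := hK.exists_surjective
    rw [Function.iterate_succ_apply']
    exact ⟨(LinearMap.ker f).map K.subtype, (hK.ker_top (by omega) hf).congr
      (Submodule.equivMapOfInjective K.subtype K.subtype_injective _)⟩

theorem IsUniserialOf.submodule (h : IsUniserialOf M S l) (hkl : k < l) {K : Submodule A M}
    (hK : Module.length A K = (l - k : ℕ)) : IsUniserialOf K (tau^[k] S) (l - k) := by
  obtain ⟨K', hK'⟩ := h.exists_submodule hkl
  rwa [h.isUniserialModule.eq_of_length_eq (hK ▸ ENat.natCast_ne_top _)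
    (hK.trans hK'.length_eq.symm)]

theorem IsUniserialOf.ker_projCover (h : IsUniserialOf M S l) (hl : l < coverLength S)
    {q : projCover S →ₗ[A] M} (hq : Function.Surjective q) :
    IsUniserialOf (LinearMap.ker q) (tau^[l] S) (coverLength S - l) :=
  (isUniserialOf_projCover S).submodule hl
    (length_ker_eq_sub hq (isUniserialOf_projCover S).length_eq h.length_eq)

theorem exists_isUniserialOf (S : SimpleMod A) (hl : 1 ≤ l)
    (hlS : l ≤ coverLength S) : ∃ M : ModuleCat.{0} A, IsUniserialOf M S l := by
  have hP := isUniserialOf_projCover S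
  rcases hlS.eq_or_lt with rfl | hlt
  · exact ⟨projCover S, hP⟩
  obtain ⟨K, hK⟩ := hP.exists_submodule hlt
  obtain ⟨f, hf⟩ := hP.exists_surjective
  have hKtop : K ≠ ⊤ := by
    rintro rfl
    have hlen := hK.length_eq
    rw [Module.length_top, hP.length_eq] at hlen
    norm_cast at hlen
    omega
  obtain ⟨g, -, hg⟩ := exists_surjective_factor K.mkQ_surjective hf
    (K.ker_mkQ.trans_le (hP.isUniserialModule.le_ker hf hKtop))
  obtain ⟨m, hm⟩ := ENat.ne_top_iff_exists.1 (Module.length_ne_top (R := A) (M := projCover S ⧸ K))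
  have hlen := length_eq_length_ker_add K.mkQ_surjective
  rw [K.ker_mkQ, hK.length_eq, hP.length_eq, ← hm] at hlen
  norm_cast at hlen
  obtain rfl : m = l := by omega
  exact ⟨ModuleCat.of A (projCover S ⧸ K),
    hP.isUniserialModule.of_surjective K.mkQ_surjective, hm.symm, g, hg⟩

theorem IsUniserialOf.exists_socle (h : IsUniserialOf M S (l + 1)) :
    ∃ i : (tau^[l] S : SimpleMod A) →ₗ[A] M, Function.Injective i := by
  obtain ⟨K, hK⟩ := h.exists_submodule (Nat.lt_succ_self l)
  rw [Nat.add_sub_cancel_left] at hK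
  obtain ⟨e⟩ := (isUniserialOf_simple _).nonempty_equiv hK
  exact ⟨K.subtype ∘ₗ e.toLinearMap, K.subtype_injective.comp e.injective⟩

theorem IsUniserialOf.socle_equiv (h : IsUniserialOf M S (l + 1)) {i : T →ₗ[A] M}
    (hi : Function.Injective i) : T ≈ tau^[l] S := by
  have e := LinearEquiv.ofInjective i hi
  have hrange := (isUniserialOf_simple T).congr e
  refine hrange.top_equiv_top (h.submodule (Nat.lt_succ_self l) ?_)
  rw [hrange.length_eq, Nat.add_sub_cancel_left]

end Cyclic

end Nakayama

section AlmostSplit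

variable {A : Type} [Ring A]

theorem exists_comp_eq_id_iff_hom {X Y : ModuleCat.{0} A} {g : X ⟶ Y} :
    (∃ s : Y ⟶ X, s ≫ g = 𝟙 Y) ↔ ∃ s : Y →ₗ[A] X, g.hom ∘ₗ s = LinearMap.id :=
  ⟨fun ⟨s, hs⟩ => ⟨s.hom, congrArg ModuleCat.Hom.hom hs⟩,
    fun ⟨s, hs⟩ => ⟨ModuleCat.ofHom s, ModuleCat.hom_ext hs⟩⟩

theorem exists_section_or_lift_of_finite [IsNakayamaRing A] {E : Type} [AddCommGroup E]
    [Module A E] {U : SimpleMod A} (hE : IsUniserialOf E U 2) {g : E →ₗ[A] U}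
    (hg : Function.Surjective g) (X : ModuleCat.{0} A) [Module.Finite A X] (h : X →ₗ[A] U) :
    (∃ s : U →ₗ[A] X, h ∘ₗ s = LinearMap.id) ∨ ∃ k : X →ₗ[A] E, g ∘ₗ k = h := by
  refine finite_induction_indec (motive := fun X => ∀ h : X →ₗ[A] U,
    (∃ s : U →ₗ[A] X, h ∘ₗ s = LinearMap.id) ∨ ∃ k : X →ₗ[A] E, g ∘ₗ k = h) ?_ ?_ ?_ X h
  · intro X _ h
    exact .inr ⟨0, LinearMap.ext fun x => by rw [Subsingleton.elim x 0, map_zero, map_zero]⟩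
  · intro X _ hX h
    rcases eq_or_ne h 0 with rfl | hne
    · exact .inr ⟨0, LinearMap.comp_zero g⟩
    have hh := LinearMap.surjective_of_ne_zero hne
    obtain ⟨l, hl⟩ := ENat.ne_top_iff_exists.1 (Module.length_ne_top (R := A) (M := X))
    have hXl : IsUniserialOf X U l := ⟨isUniserialModule_of_indec hX, hl.symm, h, hh⟩
    rcases hXl.one_le.eq_or_lt with rfl | hl2
    · have hinj := injective_of_surjective_of_length_eq hh hXl.length_eq
        (isUniserialOf_simple U).length_eq
      let e := LinearEquiv.ofBijective h ⟨hinj, hh⟩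
      exact .inl ⟨e.symm, LinearMap.ext e.apply_symm_apply⟩
    · obtain ⟨k, hk, -⟩ := hXl.exists_surjective_of_le hE hl2 hh hg
      exact .inr ⟨k, hk⟩
  · intro X N N' hNN' ih ih' h
    rcases ih (h ∘ₗ N.subtype) with ⟨s, hs⟩ | ⟨k, hk⟩
    · exact .inl ⟨N.subtype ∘ₗ s, hs⟩
    rcases ih' (h ∘ₗ N'.subtype) with ⟨s, hs⟩ | ⟨k', hk'⟩
    · exact .inl ⟨N'.subtype ∘ₗ s, hs⟩
    refine .inr ⟨k ∘ₗ N.projectionOnto N' hNN' + k' ∘ₗ N'.projectionOnto N hNN'.symm, ?_⟩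
    rw [LinearMap.comp_add, ← LinearMap.comp_assoc, ← LinearMap.comp_assoc, hk, hk']
    ext x
    simpa using congrArg h (Submodule.projection_add_projection_eq_self hNN' x)

theorem exists_section_or_lift [IsCyclicNakayamaRing A] {E : Type} [AddCommGroup E]
    [Module A E] {U : SimpleMod A} (hE : IsUniserialOf E U 2) {g : E →ₗ[A] U}
    (hg : Function.Surjective g) {X : Type} [AddCommGroup X] [Module A X] (h : X →ₗ[A] U) :
    (∃ s : U →ₗ[A] X, h ∘ₗ s = LinearMap.id) ∨ ∃ k : X →ₗ[A] E, g ∘ₗ k = h := by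
  by_cases hs : ∃ s : U →ₗ[A] X, h ∘ₗ s = LinearMap.id
  · exact .inl hs
  have : IsSimpleModule A (LinearMap.ker g) :=
    Module.length_eq_one_iff.1 (hE.length_ker hg)
  refine .inr (exists_lift_of_forall_fg hg fun X₀ hX₀ => ?_)
  have : Module.Finite A (ModuleCat.of A X₀) := Module.Finite.iff_fg.2 hX₀
  refine (exists_section_or_lift_of_finite hE hg (ModuleCat.of A X₀)
    (h ∘ₗ X₀.subtype)).resolve_left ?_
  rintro ⟨s, hsX₀⟩
  exact hs ⟨X₀.subtype ∘ₗ s, hsX₀⟩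

theorem indec_simple (S : SimpleMod A) : Indec A S.1 :=
  indec_of_isUniformModule (isUniserialOf_simple S).isUniserialModule.isUniformModule

variable [IsCyclicNakayamaRing A]

theorem isTauOf_tau (U : SimpleMod A) : IsTauOf A (tau U).1 U.1 := by
  obtain ⟨E, hE⟩ := exists_isUniserialOf U one_le_two (two_le_coverLength U)
  obtain ⟨g, hg⟩ := hE.exists_surjective
  obtain ⟨e⟩ := (isUniserialOf_simple (tau U)).nonempty_equiv (hE.ker_top le_rfl hg)
  let f : tau U →ₗ[A] E := (LinearMap.ker g).subtype ∘ₗ e.toLinearMap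
  have hrange : LinearMap.range f = LinearMap.ker g := by
    rw [LinearMap.range_comp, LinearEquiv.range, Submodule.map_top, Submodule.range_subtype]
  have not_split : ¬ ∃ s : U →ₗ[A] E, g ∘ₗ s = LinearMap.id := by
    rintro ⟨s, hs⟩
    have hne : g ∘ₗ s ≠ 0 := hs ▸ ne_zero_of_surjective Function.surjective_id
    have hle := Module.length_le_of_surjective s
      (hE.isUniserialModule.surjective_of_comp_ne_zero hg hne)
    rw [hE.length_eq, (isUniserialOf_simple U).length_eq] at hle
    exact absurd hle (by norm_cast)
  refine ⟨E, ModuleCat.ofHom f, ModuleCat.ofHom g,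
    (ModuleCat.mono_iff_injective _).2 ((LinearMap.ker g).subtype_injective.comp e.injective),
    (ModuleCat.epi_iff_surjective _).2 hg, ⟨ModuleCat.hom_ext ?_, ?_⟩,
    mt exists_comp_eq_id_iff_hom.1 not_split, indec_simple _, indec_simple _, fun X h hns => ?_⟩
  · exact LinearMap.range_le_ker_iff.1 hrange.le
  · exact (ShortComplex.moduleCat_exact_iff_range_eq_ker _).2 hrange
  · obtain ⟨k, hk⟩ := (exists_section_or_lift hE hg h.hom).resolve_left
      (mt exists_comp_eq_id_iff_hom.2 hns)
    exact ⟨ModuleCat.ofHom k, ModuleCat.hom_ext hk⟩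

theorem exists_section_of_length_eq_two {E : Type} [AddCommGroup E] [Module A E]
    {U : SimpleMod A} (hE : Module.length A E = 2) {g : E →ₗ[A] U} {q : projCover U →ₗ[A] E}
    (hq : g ∘ₗ q = projCoverMap U) (hqs : ¬ Function.Surjective q) :
    ∃ s : U →ₗ[A] E, g ∘ₗ s = LinearMap.id := by
  let R := LinearMap.range q
  have hR : Function.Surjective (g ∘ₗ R.subtype) := fun y =>
    let ⟨x, hx⟩ := projCoverMap_surjective U y
    ⟨⟨q x, x, rfl⟩, (LinearMap.congr_fun hq x).trans hx⟩
  have hlen : Module.length A R = (1 : ℕ) := by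
    refine le_antisymm ?_ ?_
    · have hle := Module.length_le_of_injective R.subtype R.subtype_injective
      have hlt := length_submodule_lt_of_lt (lt_top_iff_ne_top.2 (mt LinearMap.range_eq_top.1 hqs))
        (hle.trans_lt (hE ▸ (ENat.ofNat_ne_top 2).lt_top)).ne
      rw [Module.length_top, hE] at hlt
      exact Order.le_of_lt_succ hlt
    · rw [← (isUniserialOf_simple U).length_eq]
      exact Module.length_le_of_surjective _ hR
  let e := LinearEquiv.ofBijective _ ⟨injective_of_surjective_of_length_eq hR hlen
    (isUniserialOf_simple U).length_eq, hR⟩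
  exact ⟨R.subtype ∘ₗ e.symm, LinearMap.ext e.apply_symm_apply⟩

theorem equiv_tau_of_isTauOf {W U : SimpleMod A} (h : IsTauOf A W.1 U.1) : W ≈ tau U := by
  obtain ⟨E, f, g, hf, hg, ⟨w, hex⟩, hns, -⟩ := h
  rw [ModuleCat.mono_iff_injective] at hf
  rw [ModuleCat.epi_iff_surjective] at hg
  have hrange : LinearMap.range f.hom = LinearMap.ker g.hom :=
    (ShortComplex.moduleCat_exact_iff_range_eq_ker _).1 hex
  let e : W ≃ₗ[A] LinearMap.ker g.hom :=
    LinearEquiv.ofInjective f.hom hf ≪≫ₗ LinearEquiv.ofEq _ _ hrange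
  have hlen : Module.length A E = 2 := by
    rw [length_eq_length_ker_add hg, ← e.length_eq, (isUniserialOf_simple U).length_eq,
      (isUniserialOf_simple W).length_eq]
    norm_num
  obtain ⟨q, hq⟩ := Module.projective_lifting_property g.hom (projCoverMap U) hg
  have hqs : Function.Surjective q := by
    contrapose! hns
    exact exists_comp_eq_id_iff_hom.2 (exists_section_of_length_eq_two hlen hq hns)
  have hE : IsUniserialOf E U 2 :=
    ⟨(isUniserialModule_projCover U).of_surjective hqs, hlen, g.hom, hg⟩
  exact (isUniserialOf_simple W).top_equiv_top ((hE.ker_top le_rfl hg).congr e.symm)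

end AlmostSplit

section Injective

variable {A : Type} [Ring A]

theorem IsUniformModule.isUniserialModule [IsNakayamaRing A] {M : Type} [AddCommGroup M]
    [Module A M] (h : IsUniformModule A M) : IsUniserialModule A M := by
  intro K L
  refine or_iff_not_imp_left.2 fun hKL y hy => ?_
  obtain ⟨x, hx, hxL⟩ := SetLike.not_le_iff_exists.1 hKL
  let N := Submodule.span A {x, y}
  have hxN : x ∈ N := Submodule.subset_span (Set.mem_insert x {y})
  have hyN : y ∈ N := Submodule.subset_span (Set.mem_insert_of_mem x rfl)
  have hN : Module.Finite A N := Module.Finite.span_of_finite A (Set.toFinite {x, y})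
  have : Nontrivial N := nontrivial_of_ne ⟨x, hxN⟩ 0 fun h0 =>
    hxL ((show x = 0 from congrArg Subtype.val h0).symm ▸ L.zero_mem)
  have hser := isUniserialModule_of_indec
    (indec_of_isUniformModule (h.of_injective N.subtype_injective))
  rcases hser (K.comap N.subtype) (L.comap N.subtype) with hle | hle
  · exact absurd (hle (show (⟨x, hxN⟩ : N) ∈ K.comap N.subtype from hx)) hxL
  · exact hle (show (⟨y, hyN⟩ : N) ∈ L.comap N.subtype from hy)

theorem exists_isUniserialOf_of_surjective [IsNakayamaRing A] {M : Type} [AddCommGroup M]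
    [Module A M] (h : IsUniserialModule A M) {S : SimpleMod A} {f : M →ₗ[A] S}
    (hf : Function.Surjective f) : ∃ l, IsUniserialOf M S l := by
  obtain ⟨q, hq⟩ := Module.projective_lifting_property f (projCoverMap S) hf
  have hqs := h.surjective_of_comp_ne_zero hf (g := q)
    (hq ▸ ne_zero_of_surjective (projCoverMap_surjective S))
  have := Module.Finite.of_surjective q hqs
  exact ⟨_, h, (ENat.natCast_toNat Module.length_ne_top).symm, f, hf⟩

theorem exists_isUniformModule_quotient_of_injective {M : Type} [AddCommGroup M] [Module A M]
    (h : IsUniformModule A M) : ∃ (Q H : ModuleCat.{0} A) (j : M →ₗ[A] Q) (π : Q →ₗ[A] H),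
      Module.Injective A Q ∧ Function.Injective (π ∘ₗ j) ∧ IsUniformModule A H := by
  let j := (CategoryTheory.Injective.ι (ModuleCat.of A M)).hom
  have hj : Function.Injective j := (ModuleCat.mono_iff_injective _).1 inferInstance
  obtain ⟨C, hinj, hess⟩ := exists_essential_quotient hj
  exact ⟨CategoryTheory.Injective.under (ModuleCat.of A M), ModuleCat.of A (_ ⧸ C), j, C.mkQ,
    (Module.injective_iff_injective_object A _).2 (CategoryTheory.Injective.injective_under _),
    hinj, h.of_hasEssentialRange hinj hess⟩

theorem exists_isUniformModule_amalgam {T M N : Type} [AddCommGroup T] [Module A T] [Nontrivial T]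
    [AddCommGroup M] [Module A M] [AddCommGroup N] [Module A N] (hM : IsUniformModule A M)
    (hN : IsUniformModule A N) {f : T →ₗ[A] M} (hf : Function.Injective f) {g : T →ₗ[A] N}
    (hg : Function.Injective g) : ∃ (H : ModuleCat.{0} A) (f' : M →ₗ[A] H) (g' : N →ₗ[A] H),
      IsUniformModule A H ∧ Function.Injective f' ∧ Function.Injective g' := by
  obtain ⟨Q, H, j, π, hQ, hπj, hH⟩ :=
    exists_isUniformModule_quotient_of_injective (hM.of_injective hf)
  obtain ⟨f', hf'⟩ := Module.Injective.extension_property A _ _ _ f hf j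
  obtain ⟨g', hg'⟩ := Module.Injective.extension_property A _ _ _ g hg j
  refine ⟨H, π ∘ₗ f', π ∘ₗ g', hH, hM.injective_of_comp hf ?_, hN.injective_of_comp hg ?_⟩
  · rwa [LinearMap.comp_assoc, hf']
  · rwa [LinearMap.comp_assoc, hg']

variable [IsCyclicNakayamaRing A] {U V : SimpleMod A}

theorem equiv_of_tau_equiv (h : tau U ≈ tau V) : U ≈ V := by
  obtain ⟨E, hE⟩ := exists_isUniserialOf U one_le_two (two_le_coverLength U)
  obtain ⟨F, hF⟩ := exists_isUniserialOf V one_le_two (two_le_coverLength V)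
  obtain ⟨i, hi⟩ := hE.exists_socle (l := 1)
  obtain ⟨j, hj⟩ := hF.exists_socle (l := 1)
  obtain ⟨e⟩ := h
  obtain ⟨H, f, g, hH, hf, hg⟩ := exists_isUniformModule_amalgam
    hE.isUniserialModule.isUniformModule hF.isUniserialModule.isUniformModule (T := tau U)
    hi (g := j ∘ₗ e.toLinearMap) (hj.comp e.injective)
  obtain ⟨e'⟩ := hH.isUniserialModule.nonempty_equiv_of_injective hf hg hE.length_ne_top
    (hE.length_eq.trans hF.length_eq.symm)
  exact (hE.congr e').top_equiv_top hF

theorem IsUniserialOf.surjective_of_coverLength_le {I H : Type} [AddCommGroup I] [Module A I]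
    [AddCommGroup H] [Module A H] {y : ℕ} (h : IsUniserialOf I (tau U) y) (hy : coverLength U ≤ y)
    (hH : IsUniserialModule A H) {f : I →ₗ[A] H} (hf : Function.Injective f) :
    Function.Surjective f := by
  rw [← LinearMap.range_eq_top, eq_top_iff]
  by_contra hne
  obtain ⟨x, -, hx⟩ := SetLike.not_le_iff_exists.1 hne
  let K := Submodule.span A {x}
  have hfK : LinearMap.range f < K := by
    have hKf : ¬ K ≤ LinearMap.range f := fun hle => hx (hle (Submodule.mem_span_singleton_self x))
    exact ((hH _ _).resolve_right hKf).lt_of_not_ge hKf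
  have hrange := (LinearEquiv.ofInjective f hf).length_eq
  have : Nontrivial K := Submodule.nontrivial_iff_ne_bot.2 hfK.ne_bot
  obtain ⟨V, l, hV⟩ := IsUniserialOf.exists_of_isUniserialModule
    (hH.of_injective K.subtype_injective)
  have hyl := length_submodule_lt_of_lt hfK (hrange ▸ h.length_ne_top)
  rw [← hrange, h.length_eq, hV.length_eq, Nat.cast_lt] at hyl
  obtain ⟨L, hL⟩ := hV.exists_submodule (k := l - (y + 1)) (by omega)
  rw [Nat.sub_sub_self hyl] at hL
  obtain ⟨t, ht⟩ := hL.exists_surjective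
  have hker := hL.ker_top (Nat.succ_le_succ h.one_le) ht
  obtain ⟨e⟩ := hH.nonempty_equiv_of_injective
    (f := K.subtype ∘ₗ L.subtype ∘ₗ (LinearMap.ker t).subtype)
    (K.subtype_injective.comp (L.subtype_injective.comp (LinearMap.ker t).subtype_injective)) hf
    hker.length_ne_top (hker.length_eq.trans h.length_eq.symm)
  have hUV := equiv_of_tau_equiv ((hker.congr e).top_equiv_top h)
  have hle := (hL.congr_top hUV).le_coverLength
  omega

theorem IsUniserialOf.injective_iff {I : Type} [AddCommGroup I] [Module A I] {y : ℕ}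
    (h : IsUniserialOf I (tau U) y) : Module.Injective A I ↔ coverLength U ≤ y := by
  constructor
  · intro hI
    by_contra! hlt
    obtain ⟨E, hE⟩ := exists_isUniserialOf U (Nat.succ_pos y) hlt
    obtain ⟨g, hg⟩ := hE.exists_surjective
    have hker := hE.ker_top (Nat.succ_le_succ h.one_le) hg
    obtain ⟨e⟩ := hker.nonempty_equiv h
    obtain ⟨k, hk⟩ := Module.Injective.extension_property A _ _ _ _
      (LinearMap.ker g).subtype_injective e.toLinearMap
    have := hker.nontrivial
    have hkinj := hE.isUniserialModule.isUniformModule.injective_of_comp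
      (LinearMap.ker g).subtype_injective (g := k) (hk ▸ e.injective)
    have hle := Module.length_le_of_injective k hkinj
    rw [hE.length_eq, h.length_eq, Nat.cast_le] at hle
    omega
  · intro hy
    obtain ⟨Q, H, j, π, hQ, hπj, hH⟩ :=
      exists_isUniformModule_quotient_of_injective h.isUniserialModule.isUniformModule
    have hsurj := h.surjective_of_coverLength_le hy hH.isUniserialModule hπj
    let e := LinearEquiv.ofBijective _ ⟨hπj, hsurj⟩
    have hQI : Retract (ModuleCat.of A I) Q :=
      { i := ModuleCat.ofHom j
        r := ModuleCat.ofHom (e.symm.toLinearMap ∘ₗ π)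
        retract := ModuleCat.hom_ext (LinearMap.ext e.symm_apply_apply) }
    have := (Module.injective_iff_injective_object A Q).1 hQ
    exact (Module.injective_iff_injective_object A I).2 hQI.injective

theorem isUniserialModule_of_isInjectiveEnvelopeHom {T : SimpleMod A} {I : ModuleCat.{0} A}
    {f : T.1 ⟶ I} (hf : IsInjectiveEnvelopeHom A f) : IsUniserialModule A I := by
  obtain ⟨-, hmono, hess⟩ := hf
  rw [ModuleCat.mono_iff_injective] at hmono
  have hT := (isUniserialOf_simple T).isUniserialModule.isUniformModule
  refine (hT.of_hasEssentialRange (f := f.hom) hmono fun K hK => ?_).isUniserialModule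
  have hmkQ : Mono (ModuleCat.ofHom K.mkQ) := hess _ _ <| by
    refine (ModuleCat.mono_iff_injective _).2 ((injective_iff_map_eq_zero _).2 fun t ht => ?_)
    have htK : f.hom t ∈ K := (Submodule.Quotient.mk_eq_zero K).1 ht
    exact (map_eq_zero_iff f.hom hmono).1 (Submodule.disjoint_def.1 hK _ htK ⟨t, rfl⟩)
  rw [← K.ker_mkQ]
  exact LinearMap.ker_eq_bot.2 ((ModuleCat.mono_iff_injective _).1 hmkQ)

theorem isPsiOf_iff {T U : SimpleMod A} : IsPsiOf A T.1 U.1 ↔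
    ∃ y, coverLength U ≤ y ∧ y ≤ coverLength (tau U) ∧ T ≈ tau^[y] U := by
  constructor
  · rintro ⟨I, ⟨f, hf⟩, W, ⟨hW, r, hr, -⟩, hτ⟩
    obtain ⟨y, hy⟩ := exists_isUniserialOf_of_surjective (S := ⟨W, hW⟩)
      (isUniserialModule_of_isInjectiveEnvelopeHom hf) ((ModuleCat.epi_iff_surjective r).1 hr)
    have hI := hy.congr_top (equiv_tau_of_isTauOf (W := ⟨W, hW⟩) hτ)
    obtain ⟨l, rfl⟩ := Nat.exists_eq_add_of_le' hy.one_le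
    exact ⟨l + 1, hI.injective_iff.1 ((Module.injective_iff_injective_object A I).2 hf.1),
      hI.le_coverLength, hI.socle_equiv ((ModuleCat.mono_iff_injective f).1 hf.2.1)⟩
  · rintro ⟨y, hUy, hyU, e⟩
    have hy1 : 1 ≤ y := one_le_two.trans ((two_le_coverLength U).trans hUy)
    obtain ⟨I, hI⟩ := exists_isUniserialOf (tau U) hy1 hyU
    obtain ⟨l, rfl⟩ := Nat.exists_eq_add_of_le' hy1
    obtain ⟨i, hi⟩ := hI.exists_socle
    obtain ⟨r, hr⟩ := hI.exists_surjective
    obtain ⟨e⟩ := e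
    have hf : Function.Injective (i ∘ₗ e.toLinearMap) := hi.comp e.injective
    refine ⟨I, ⟨ModuleCat.ofHom (i ∘ₗ e.toLinearMap), ?_, (ModuleCat.mono_iff_injective _).2 hf,
      fun N g hg => ?_⟩, (tau U).1, ⟨(tau U).2, ModuleCat.ofHom r,
      (ModuleCat.epi_iff_surjective _).2 hr, fun N g hg => ?_⟩, isTauOf_tau U⟩
    · exact (Module.injective_iff_injective_object A I).1 (hI.injective_iff.2 hUy)
    · rw [ModuleCat.mono_iff_injective] at hg ⊢
      exact hI.isUniserialModule.isUniformModule.injective_of_comp hf hg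
    · rw [ModuleCat.epi_iff_surjective] at hg ⊢
      exact hI.isUniserialModule.surjective_of_comp_ne_zero hr (ne_zero_of_surjective hg)

end Injective

section ProjectiveDimension

theorem lt_iff_exists_lt_succ {f : ℕ → ℕ} (hf : Monotone f) {a b : ℕ} (hab : a ≤ b) :
    f a < f b ↔ ∃ y, a ≤ y ∧ y < b ∧ f y < f (y + 1) := by
  constructor
  · intro hlt
    contrapose! hlt
    induction b, hab using Nat.le_induction with
    | base => exact le_rfl
    | succ b hab ih =>
      exact (hlt b hab b.lt_succ_self).trans
        (ih fun y hay hyb => hlt y hay (hyb.trans b.lt_succ_self))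
  · rintro ⟨y, hay, hyb, hlt⟩
    exact (hf hay).trans_lt (hlt.trans_le (hf hyb))

theorem iterate_eq_of_le {α : Type*} {f : α → α} {m n : ℕ} {x y : α} (hmn : m ≤ n)
    (h : f^[m] x = f^[m] y) : f^[n] x = f^[n] y := by
  obtain ⟨k, rfl⟩ := Nat.exists_eq_add_of_le' hmn
  rw [Function.iterate_add_apply, Function.iterate_add_apply, h]

variable {A : Type} [Ring A]

theorem projDimLE_iff {n : ℕ} {M : ModuleCat.{0} A} :
    ProjDimLE A n M ↔ HasProjectiveDimensionLE M n := by
  have hker {P M : ModuleCat.{0} A} (f : P ⟶ M) [Epi f] :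
      (ShortComplex.mk (kernel.ι f) f (kernel.condition f)).ShortExact :=
    { exact := ShortComplex.exact_kernel f }
  constructor
  · intro h
    induction h with
    | zero M h => exact (projective_iff_hasProjectiveDimensionLE_zero _).1 h
    | succ n M P f hP hf _ ih => exact ((hker f).hasProjectiveDimensionLT_X₃_iff n hP).2 ih
  · intro h
    induction n generalizing M with
    | zero => exact .zero M ((projective_iff_hasProjectiveDimensionLE_zero _).2 h)
    | succ n ih =>
      have hP : Projective (Projective.over M) := inferInstance
      exact .succ n M _ (Projective.π M) hP inferInstance
        (ih (((hker (Projective.π M)).hasProjectiveDimensionLT_X₃_iff n hP).1 h))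

theorem projDim_le_iff {n : ℕ} {M : ModuleCat.{0} A} :
    projDim A M ≤ n ↔ HasProjectiveDimensionLE M n := by
  refine ⟨fun h => ?_, fun h => sInf_le ⟨n, rfl, projDimLE_iff.2 h⟩⟩
  have hne : {d : ℕ∞ | ∃ n : ℕ, d = n ∧ ProjDimLE A n M}.Nonempty :=
    Set.nonempty_iff_ne_empty.2 fun hempty => by
      rw [projDim, hempty, sInf_empty] at h
      exact ENat.natCast_ne_top n (top_le_iff.1 h)
  obtain ⟨k, hk, hkM⟩ := csInf_mem hne
  rw [projDim, hk, Nat.cast_le] at h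
  have := projDimLE_iff.1 hkM
  exact hasProjectiveDimensionLT_of_ge M (k + 1) (n + 1) (by omega)

section IsCompl

variable {M : ModuleCat.{0} A} {N N' : Submodule A M} {n : ℕ}

theorem hasProjectiveDimensionLE_submodule_of_isCompl (hN : IsCompl N N')
    [HasProjectiveDimensionLE M n] :
    HasProjectiveDimensionLE (ModuleCat.of A N) n := by
  refine Retract.hasProjectiveDimensionLT (Y := M)
    { i := ModuleCat.ofHom N.subtype
      r := ModuleCat.ofHom (N.projectionOnto N' hN)
      retract := ?_ } (n + 1)
  ext x
  exact congrArg Subtype.val (Submodule.projectionOnto_apply_left hN x)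

theorem hasProjectiveDimensionLE_of_isCompl (hN : IsCompl N N')
    (h : HasProjectiveDimensionLE (ModuleCat.of A N) n)
    (h' : HasProjectiveDimensionLE (ModuleCat.of A N') n) : HasProjectiveDimensionLE M n := by
  have hexact := LinearMap.shortExact_shortComplexKer
    (Submodule.projectionOnto_surjective hN.symm)
  have hker : HasProjectiveDimensionLE
      (ModuleCat.of A (LinearMap.ker (N'.projectionOnto N hN.symm))) n := by
    rwa [Submodule.ker_projectionOnto]
  exact hexact.hasProjectiveDimensionLT_X₂ (n + 1) hker h'

end IsCompl

section Interval

variable [IsCyclicNakayamaRing A] (S : SimpleMod A)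

/-- Let the interval `[i, j)` encode the uniserial module of length `j - i` with top `tau^[i] S`.
The projective cover of `tau^[i] S` is then the interval `[i, coverEnd S i)`, and the syzygy of
`[i, j)` is `[j, coverEnd S i)`. -/
def coverEnd (i : ℕ) : ℕ := i + coverLength (tau^[i] S)

theorem coverEnd_mono : Monotone (coverEnd S) := by
  refine monotone_nat_of_le_succ fun i => ?_
  have hle := coverLength_le_coverLength_tau_add_one (tau^[i] S)
  rw [coverEnd, coverEnd, Function.iterate_succ_apply']
  omega

theorem lt_coverEnd (i : ℕ) : i < coverEnd S i := by
  have := two_le_coverLength (tau^[i] S)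
  rw [coverEnd]
  omega

variable {S} {M : Type} [AddCommGroup M] [Module A M] {i j : ℕ}

theorem IsUniserialOf.projective_iff_eq_coverEnd (hij : i < j)
    (h : IsUniserialOf M (tau^[i] S) (j - i)) :
    Projective (ModuleCat.of A M) ↔ j = coverEnd S i := by
  rw [← IsProjective.iff_projective, h.projective_iff, coverEnd]
  omega

theorem IsUniserialOf.exists_syzygy (hij : i < j) (hj : j < coverEnd S i)
    (h : IsUniserialOf M (tau^[i] S) (j - i)) :
    ∃ N : ModuleCat.{0} A, IsUniserialOf N (tau^[j] S) (coverEnd S i - j) ∧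
      ∀ n, HasProjectiveDimensionLE (ModuleCat.of A M) (n + 1) ↔ HasProjectiveDimensionLE N n := by
  obtain ⟨q, hq⟩ := h.exists_projCover_surjective
  have hker := h.ker_projCover (by rw [coverEnd] at hj; omega) hq
  rw [← Function.iterate_add_apply, Nat.sub_add_cancel hij.le] at hker
  refine ⟨ModuleCat.of A (LinearMap.ker q), ?_, fun n =>
    (LinearMap.shortExact_shortComplexKer hq).hasProjectiveDimensionLT_X₃_iff n
      ((IsProjective.iff_projective (R := A) (projCover (tau^[i] S))).1 inferInstance)⟩
  rwa [show coverEnd S i - j = coverLength (tau^[i] S) - (j - i) by rw [coverEnd]; omega]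

theorem IsUniserialOf.hasProjectiveDimensionLE_iff {n : ℕ} (hij : i < j) (hj : j ≤ coverEnd S i)
    (h : IsUniserialOf M (tau^[i] S) (j - i)) :
    HasProjectiveDimensionLE (ModuleCat.of A M) n ↔
      ∃ m, (2 * m ≤ n + 1 ∧ (coverEnd S)^[m] i = (coverEnd S)^[m] j) ∨
        (2 * m ≤ n ∧ (coverEnd S)^[m] j = (coverEnd S)^[m] (coverEnd S i)) := by
  induction n generalizing M i j with
  | zero =>
    rw [← projective_iff_hasProjectiveDimensionLE_zero, h.projective_iff_eq_coverEnd hij]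
    refine ⟨fun heq => ⟨0, .inr ⟨le_rfl, heq⟩⟩, ?_⟩
    rintro ⟨m, ⟨hm, heq⟩ | ⟨hm, heq⟩⟩ <;> obtain rfl : m = 0 := by omega
    exacts [absurd heq hij.ne, heq]
  | succ n ih =>
    rcases hj.eq_or_lt with heq | hlt
    · have := (projective_iff_hasProjectiveDimensionLE_zero _).1
        ((h.projective_iff_eq_coverEnd hij).2 heq)
      exact iff_of_true (hasProjectiveDimensionLT_of_ge _ 1 _ (by omega))
        ⟨0, .inr ⟨Nat.zero_le _, heq⟩⟩
    obtain ⟨N, hN, hpd⟩ := h.exists_syzygy hij hlt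
    rw [hpd n, ih hlt (coverEnd_mono S hij.le) hN]
    constructor
    · rintro ⟨m, ⟨hm, heq⟩ | ⟨hm, heq⟩⟩
      exacts [⟨m, .inr ⟨hm, heq⟩⟩, ⟨m + 1, .inl ⟨by omega, heq⟩⟩]
    · rintro ⟨_ | m, ⟨hm, heq⟩ | ⟨hm, heq⟩⟩
      exacts [absurd heq hij.ne, absurd heq hlt.ne, ⟨m, .inr ⟨by omega, heq⟩⟩,
        ⟨m + 1, .inl ⟨hm, heq⟩⟩]

end Interval

end ProjectiveDimension

section PsiPath

variable {A : Type} [Ring A]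

theorem psiPathTo_congr {m : ℕ} {T U : SimpleMod A} (e : T ≈ U) (h : PsiPathTo A m T.1) :
    PsiPathTo A m U.1 :=
  let ⟨hm, c, hc, hpsi, ⟨e'⟩⟩ := h
  let ⟨e⟩ := e
  ⟨hm, c, hc, hpsi, ⟨e' ≪≫ e.toModuleIso⟩⟩

theorem psiPathTo_one (U : SimpleMod A) : PsiPathTo A 1 U.1 :=
  ⟨le_rfl, fun _ => U.1, fun _ _ => U.2, fun i hi => by omega, ⟨Iso.refl _⟩⟩

variable [IsCyclicNakayamaRing A]

theorem isPsiOf_congr {T U T' U' : SimpleMod A} (hT : T ≈ T') (hU : U ≈ U')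
    (h : IsPsiOf A T.1 U.1) : IsPsiOf A T'.1 U'.1 := by
  obtain ⟨y, hy, hy', e⟩ := isPsiOf_iff.1 h
  exact isPsiOf_iff.2 ⟨y, coverLength_congr hU ▸ hy, coverLength_congr (tau_congr hU) ▸ hy',
    Setoid.trans (Setoid.symm hT) (Setoid.trans e (tau_iterate_congr hU y))⟩

theorem psiPathTo_add_two_iff {m : ℕ} {U : SimpleMod A} : PsiPathTo A (m + 2) U.1 ↔
    ∃ T : SimpleMod A, PsiPathTo A (m + 1) T.1 ∧ IsPsiOf A T.1 U.1 := by
  constructor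
  · rintro ⟨-, c, hc, hpsi, ⟨e⟩⟩
    let T : SimpleMod A := ⟨c m, hc m (by omega)⟩
    let U' : SimpleMod A := ⟨c (m + 1), hc (m + 1) (by omega)⟩
    have hTU : IsPsiOf A T.1 U'.1 := hpsi m (by omega)
    exact ⟨T, ⟨by omega, c, fun i hi => hc i (by omega), fun i hi => hpsi i (by omega),
      ⟨Iso.refl _⟩⟩, isPsiOf_congr (Setoid.refl T) ⟨e.toLinearEquiv⟩ hTU⟩
  · rintro ⟨T, ⟨-, c, hc, hpsi, ⟨e⟩⟩, hTU⟩
    let c' := Function.update c (m + 1) U.1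
    have hlast : c' (m + 1) = U.1 := Function.update_self ..
    have hinit (i : ℕ) (hi : i ≤ m) : c' i = c i := Function.update_of_ne (by omega) ..
    refine ⟨by omega, c', fun i hi => ?_, fun i hi => ?_, ⟨eqToIso hlast⟩⟩
    · rcases (Nat.le_of_lt_succ hi).eq_or_lt with rfl | hi
      · exact hlast ▸ U.2
      · exact hinit i (by omega) ▸ hc i hi
    · rw [hinit i (by omega)]
      rcases (show i ≤ m by omega).eq_or_lt with rfl | hi
      · let T' : SimpleMod A := ⟨c i, hc i (by omega)⟩
        exact hlast ▸ isPsiOf_congr (T' := T') ⟨(Iso.toLinearEquiv e).symm⟩ (Setoid.refl U) hTU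
      · rw [hinit (i + 1) hi]
        exact hpsi i (by omega)

variable (S : SimpleMod A)

theorem isPsiOf_iterate_tau_iff {T : SimpleMod A} {i : ℕ} : IsPsiOf A T.1 (tau^[i] S).1 ↔
    ∃ k, coverEnd S i ≤ k ∧ k < coverEnd S (i + 1) ∧ T ≈ tau^[k] S := by
  rw [isPsiOf_iff, ← Function.iterate_succ_apply' tau i S, Nat.succ_eq_add_one]
  constructor
  · rintro ⟨y, hy, hy', e⟩
    rw [← Function.iterate_add_apply] at e
    exact ⟨y + i, by rw [coverEnd]; omega, by rw [coverEnd]; omega, e⟩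
  · rintro ⟨k, hk, hk', e⟩
    have hik : i ≤ k := (lt_coverEnd S i).le.trans hk
    rw [coverEnd] at hk hk'
    refine ⟨k - i, by omega, by omega, ?_⟩
    rwa [← Function.iterate_add_apply, Nat.sub_add_cancel hik]

theorem psiPathTo_iterate_tau_iff {m i : ℕ} : PsiPathTo A (m + 1) (tau^[i] S).1 ↔
    (coverEnd S)^[m] i < (coverEnd S)^[m] (i + 1) := by
  induction m generalizing i with
  | zero => exact iff_of_true (psiPathTo_one _) i.lt_succ_self
  | succ m ih =>
    rw [psiPathTo_add_two_iff, Function.iterate_succ_apply, Function.iterate_succ_apply,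
      lt_iff_exists_lt_succ ((coverEnd_mono S).iterate m) (coverEnd_mono S i.le_succ)]
    simp only [isPsiOf_iterate_tau_iff, ← ih]
    constructor
    · rintro ⟨T, hT, k, hk, hk', e⟩
      exact ⟨k, hk, hk', psiPathTo_congr e hT⟩
    · rintro ⟨k, hk, hk', h⟩
      exact ⟨_, h, k, hk, hk', Setoid.refl _⟩

theorem aVal_iterate_tau_le_iff {m i : ℕ} : aVal A (tau^[i] S).1 ≤ m ↔
    (coverEnd S)^[m] i = (coverEnd S)^[m] (i + 1) := by
  constructor
  · intro h
    refine ((coverEnd_mono S).iterate m i.le_succ).eq_of_not_lt fun hlt => ?_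
    have hle : ((m + 1 : ℕ) : ℕ∞) ≤ aVal A (tau^[i] S).1 :=
      le_sSup ⟨m + 1, rfl, (psiPathTo_iterate_tau_iff S).2 hlt⟩
    have := Nat.cast_le.1 (hle.trans h)
    omega
  · intro h
    refine sSup_le ?_
    rintro _ ⟨k, rfl, hk⟩
    obtain ⟨k, rfl⟩ := Nat.exists_eq_add_of_le' hk.1
    have hlt := (psiPathTo_iterate_tau_iff S).1 hk
    rw [Nat.cast_le, Nat.succ_le_iff]
    by_contra! hmk
    exact hlt.ne (iterate_eq_of_le hmk h)

theorem iterate_coverEnd_eq_of_aAlg {a m i j : ℕ} (ha : aAlg A = a) (hij : i ≤ j)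
    (h : (coverEnd S)^[m] i = (coverEnd S)^[m] j) : (coverEnd S)^[a] i = (coverEnd S)^[a] j := by
  have hmono (n : ℕ) : Monotone (coverEnd S)^[n] := (coverEnd_mono S).iterate n
  by_contra hne
  obtain ⟨y, hiy, hyj, hlt⟩ :=
    (lt_iff_exists_lt_succ (hmono a) hij).1 ((hmono a hij).lt_of_ne hne)
  have hy : (coverEnd S)^[m] y = (coverEnd S)^[m] (y + 1) :=
    (hmono m y.le_succ).antisymm ((hmono m hyj).trans (h.ge.trans (hmono m hiy)))
  have hfin := ne_top_of_le_ne_top (ENat.natCast_ne_top m) ((aVal_iterate_tau_le_iff S).2 hy)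
  have hle : aVal A (tau^[y] S).1 ≤ a := ha ▸ le_sSup ⟨_, (tau^[y] S).2, hfin, rfl⟩
  exact hlt.ne ((aVal_iterate_tau_le_iff S).1 hle)

theorem two_mul_aVal_le_of_hasProjectiveDimensionLE {a n : ℕ} (ha : aVal A S.1 = a)
    (h : HasProjectiveDimensionLE S.1 n) : 2 * a ≤ n + 1 := by
  have hcol : (coverEnd S)^[a] 0 = (coverEnd S)^[a] 1 := (aVal_iterate_tau_le_iff S).1 ha.le
  have hle {m : ℕ} (hm : (coverEnd S)^[m] 0 = (coverEnd S)^[m] 1) : a ≤ m :=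
    Nat.cast_le.1 (ha ▸ (aVal_iterate_tau_le_iff S (i := 0)).2 hm)
  obtain ⟨m, ⟨hm, heq⟩ | ⟨hm, heq⟩⟩ := ((isUniserialOf_simple S).hasProjectiveDimensionLE_iff
    (i := 0) zero_lt_one (lt_coverEnd S 0)).1 h
  · have := hle heq
    omega
  by_contra! hna
  obtain ⟨k, rfl⟩ : ∃ k, a = k + 1 := Nat.exists_eq_add_of_le' (by omega)
  have hk := iterate_eq_of_le (n := k) (by omega) heq
  rw [← Function.iterate_succ_apply, hcol, Function.iterate_succ_apply'] at hk
  exact (lt_coverEnd S _).ne hk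

theorem two_mul_aVal_le (hS : aVal A S.1 ≠ ⊤) : 2 * aVal A S.1 ≤ finProDim A + 1 := by
  obtain ⟨a, ha⟩ := ENat.ne_top_iff_exists.1 hS
  have hcol := (aVal_iterate_tau_le_iff S (i := 0)).1 ha.ge
  have hpd : projDim A S.1 ≤ (2 * a : ℕ) :=
    projDim_le_iff.2 (((isUniserialOf_simple S).hasProjectiveDimensionLE_iff
      (i := 0) zero_lt_one (lt_coverEnd S 0)).2 ⟨a, .inl ⟨by omega, hcol⟩⟩)
  have hfin := ne_top_of_le_ne_top (ENat.natCast_ne_top _) hpd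
  have hle : projDim A S.1 ≤ finProDim A :=
    le_sSup ⟨S.1, (isUniserialOf_simple S).finite, rfl, hfin⟩
  obtain ⟨d, hd⟩ := ENat.ne_top_iff_exists.1 hfin
  have hda := two_mul_aVal_le_of_hasProjectiveDimensionLE S ha.symm (projDim_le_iff.1 hd.ge)
  calc 2 * aVal A S.1 = (2 * a : ℕ) := by rw [← ha]; rfl
    _ ≤ (d + 1 : ℕ) := Nat.cast_le.2 hda
    _ ≤ finProDim A + 1 := by rw [Nat.cast_succ, hd]; gcongr

theorem two_mul_aAlg_sub_one_le_finProDim : 2 * aAlg A - 1 ≤ finProDim A := by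
  rw [tsub_le_iff_right, aAlg, ENat.mul_sSup]
  refine iSup₂_le ?_
  rintro _ ⟨S, hS, hfin, rfl⟩
  exact two_mul_aVal_le ⟨S, hS⟩ hfin

theorem hasProjectiveDimensionLE_two_mul_aAlg {a n : ℕ} (ha : aAlg A = a) (M : ModuleCat.{0} A)
    [Module.Finite A M] (h : HasProjectiveDimensionLE M n) :
    HasProjectiveDimensionLE M (2 * a) := by
  revert h
  induction M using finite_induction_indec with
  | subsingleton M hM =>
    intro _
    have := (ModuleCat.isZero_of_subsingleton M).hasProjectiveDimensionLT_zero
    exact hasProjectiveDimensionLT_of_ge M 0 _ (Nat.zero_le _)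
  | indec M hM hindec =>
    intro h
    have := hindec.1
    obtain ⟨S, l, hl⟩ := IsUniserialOf.exists_of_isUniserialModule
      (isUniserialModule_of_indec hindec)
    have hle : l ≤ coverEnd S 0 := hl.le_coverLength.trans (Nat.zero_add _).ge
    have hpd (n : ℕ) := IsUniserialOf.hasProjectiveDimensionLE_iff (S := S) (n := n) (i := 0)
      hl.one_le hle hl
    obtain ⟨m, ⟨-, heq⟩ | ⟨-, heq⟩⟩ := (hpd n).1 h
    · have hcol := iterate_coverEnd_eq_of_aAlg S ha l.zero_le heq
      exact (hpd _).2 ⟨a, .inl ⟨Nat.le_succ _, hcol⟩⟩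
    · exact (hpd _).2 ⟨a, .inr ⟨le_rfl, iterate_coverEnd_eq_of_aAlg S ha hle heq⟩⟩
  | isCompl M N N' hN ih ih' =>
    intro h
    exact hasProjectiveDimensionLE_of_isCompl hN
      (ih (hasProjectiveDimensionLE_submodule_of_isCompl hN))
      (ih' (hasProjectiveDimensionLE_submodule_of_isCompl hN.symm))

theorem finProDim_le_two_mul_aAlg : finProDim A ≤ 2 * aAlg A := by
  rcases eq_or_ne (aAlg A) ⊤ with htop | hfin
  · simp [htop]
  obtain ⟨a, ha⟩ := ENat.ne_top_iff_exists.1 hfin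
  refine sSup_le ?_
  rintro _ ⟨M, hM, rfl, hMfin⟩
  obtain ⟨n, hn⟩ := ENat.ne_top_iff_exists.1 hMfin
  have hle := projDim_le_iff.2
    (hasProjectiveDimensionLE_two_mul_aAlg ha.symm M (projDim_le_iff.1 hn.ge))
  rwa [Nat.cast_mul, ha] at hle

end PsiPath

end NakayamaAlg

open ArtinAlg NakayamaAlg in
theorem statement_15_general (A : Type) [Ring A] [IsArtinianRing A] (hNak : IsNakayama A)
    (hproj : ¬ ∃ S : ModuleCat.{0} A, IsSimpleModule A ↥S ∧ Projective S) :
    2 * aAlg A - 1 ≤ finProDim A ∧ finProDim A ≤ 2 * aAlg A := by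
  have : IsCyclicNakayamaRing A :=
    { isNakayama := hNak
      not_projective := fun S hS hS' => hproj ⟨S, hS, hS'⟩ }
  exact ⟨two_mul_aAlg_sub_one_le_finProDim, finProDim_le_two_mul_aAlg⟩

open ArtinAlg in
/-- Let `A` be a cyclic Nakayama algebra. Then
`2 a(A) - 1 ≤ fin-pro A ≤ 2 a(A)`. -/
theorem statement_15 (R : Type) [CommRing R] [IsArtinianRing R]
    (A : Type) [Ring A] [Algebra R A] [Module.Finite R A]
    (hCyc : IsCyclicNakayama A) :
    2 * aAlg A - 1 ≤ finProDim A ∧ finProDim A ≤ 2 * aAlg A := by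
  have : IsArtinianRing A := isArtinian_of_tower R inferInstance
  exact statement_15_general A hCyc.1 hCyc.2.2
end
end
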